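/- For every θ ∈ Θ_M° and every x ∈ ℝ, the score functions ℓ_{θi}(x;θ) = f_{θi}(x;θ)/f(x;θ), their x-derivatives ℓ_{θi}'(x;θ) = ∂ℓ_{θi}/∂x, and their parameter derivatives ℓ_{θiθj}(x;θ) = ∂ℓ_{θi}/∂θ_j (i,j ∈ {1,2,3,4}) are well-defined, and all of these functions are jointly continuous in (x,θ) on ℝ × Θ_M°. -/

import Mathlib

open MeasureTheory Filter

noncomputable section

def ThetaInt : Set (Fin 4 → ℝ) :=
  {θ | 0 < θ 1 ∧ θ 2 ∈ Set.Ioo (0:ℝ) 2 ∧ θ 3 ∈ Set.Ioo (-1:ℝ) 1}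

/-- Cumulant (log characteristic function) of the continuous (M₀) parameterization,
with `θ = (μ, σ, α, β)`. -/
def psiM (θ : Fin 4 → ℝ) (t : ℝ) : ℂ :=
  if θ 2 = 1 then
    ((-(|θ 1 * t|) : ℝ) : ℂ)
      - Complex.I * (((2 * θ 3 / Real.pi) * (θ 1 * t) * Real.log |θ 1 * t| : ℝ) : ℂ)
      + Complex.I * ((θ 0 * t : ℝ) : ℂ)
  else
    ((-(|θ 1 * t| ^ (θ 2)) : ℝ) : ℂ) *
        (1 + Complex.I * ((θ 3 * Real.sign t * Real.tan (Real.pi * θ 2 / 2)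
            * (|θ 1 * t| ^ (1 - θ 2) - 1) : ℝ) : ℂ))
      + Complex.I * ((θ 0 * t : ℝ) : ℂ)

/-- Characteristic function of the (M₀) parameterization. -/
def phiM (θ : Fin 4 → ℝ) (t : ℝ) : ℂ := Complex.exp (psiM θ t)

/-- Stable density in the (M₀) parameterization, via Fourier inversion. -/
def fM (θ : Fin 4 → ℝ) (x : ℝ) : ℝ :=
  (1 / (2 * Real.pi)) *
    (∫ t : ℝ, Complex.exp (-Complex.I * (t : ℂ) * (x : ℂ)) * phiM θ t).re

/-- Partial derivative of the density in parameter `i`. -/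
def fP (i : Fin 4) (θ : Fin 4 → ℝ) (x : ℝ) : ℝ :=
  deriv (fun s => fM (Function.update θ i s) x) (θ i)

/-- Second partial derivative of the density in parameters `i`, `j`. -/
def fPP (i j : Fin 4) (θ : Fin 4 → ℝ) (x : ℝ) : ℝ :=
  deriv (fun s => fP i (Function.update θ j s) x) (θ j)

/-- Derivative of the density in `x`. -/
def fX (θ : Fin 4 → ℝ) (x : ℝ) : ℝ := deriv (fun y => fM θ y) x

/-- Mixed derivative `∂²f/∂x∂θᵢ`. -/
def fPX (i : Fin 4) (θ : Fin 4 → ℝ) (x : ℝ) : ℝ := deriv (fun y => fP i θ y) x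

/-- Score functions. -/
def ellP (i : Fin 4) (θ : Fin 4 → ℝ) (x : ℝ) : ℝ := fP i θ x / fM θ x

/-- Derivative of the score in `x`. -/
def ellPX (i : Fin 4) (θ : Fin 4 → ℝ) (x : ℝ) : ℝ := deriv (fun y => ellP i θ y) x

/-- Derivative of the score `ℓ_{θᵢ}` in the parameter `θⱼ`. -/
def ellPP (i j : Fin 4) (θ : Fin 4 → ℝ) (x : ℝ) : ℝ :=
  deriv (fun s => ellP i (Function.update θ j s) x) (θ j)

/-- `h = O(r)` as `|x| → ∞`. -/
def IsBigOAtInfty (h r : ℝ → ℝ) : Prop :=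
  ∃ c > 0, ∃ M > 0, ∀ x : ℝ, M ≤ |x| → |h x| ≤ c * r x


end

section Helpers
open scoped Topology

theorem contDiffOn_two_integral {H E : Type} [NormedAddCommGroup H] [NormedSpace ℝ H]
    [NormedAddCommGroup E] [NormedSpace ℝ E] [CompleteSpace E]
    {μ : Measure ℝ} {U : Set H} (hU : IsOpen U) (K : H → ℝ → E)
    (hK : ∀ t, ContDiff ℝ 2 (fun p => K p t))
    (hm0 : ∀ p, AEStronglyMeasurable (K p) μ)
    (hm1 : ∀ p, AEStronglyMeasurable (fun t => fderiv ℝ (fun p => K p t) p) μ)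
    (hm2 : ∀ p, AEStronglyMeasurable (fun t => fderiv ℝ (fderiv ℝ (fun p => K p t)) p) μ)
    (hb : ∀ p₀ ∈ U, ∃ V ∈ 𝓝 p₀, ∃ bound : ℝ → ℝ, Integrable bound μ ∧
      ∀ᵐ t ∂μ, ∀ p ∈ V, ‖K p t‖ ≤ bound t ∧ ‖fderiv ℝ (fun p => K p t) p‖ ≤ bound t ∧
        ‖fderiv ℝ (fderiv ℝ (fun p => K p t)) p‖ ≤ bound t) :
    ContDiffOn ℝ 2 (fun p => ∫ t, K p t ∂μ) U := by
  have d1 : ∀ t, Differentiable ℝ (fun p => K p t) := fun t => (hK t).differentiable (by norm_num)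
  have c1 : ∀ t, ContDiff ℝ 1 (fderiv ℝ (fun p => K p t)) := fun t =>
    (hK t).fderiv_right (by norm_num)
  have d2 : ∀ t, Differentiable ℝ (fderiv ℝ (fun p => K p t)) := fun t =>
    (c1 t).differentiable (by norm_num)
  have c2 : ∀ t, Continuous (fderiv ℝ (fderiv ℝ (fun p => K p t))) := fun t =>
    (c1 t).continuous_fderiv (by norm_num)
  have h1 : ∀ p ∈ U, HasFDerivAt (fun p => ∫ t, K p t ∂μ)
      (∫ t, fderiv ℝ (fun p => K p t) p ∂μ) p := by
    intro p hp
    obtain ⟨V, hV, bound, hbi, hbd⟩ := hb p hp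
    refine hasFDerivAt_integral_of_dominated_of_fderiv_le hV (Eventually.of_forall hm0) ?_ (hm1 p)
      (F' := fun p t => fderiv ℝ (fun p => K p t) p) (bound := bound) ?_ hbi ?_
    · exact hbi.mono' (hm0 p) (hbd.mono fun t ht => (ht p (mem_of_mem_nhds hV)).1)
    · exact hbd.mono fun t ht q hq => (ht q hq).2.1
    · exact Eventually.of_forall fun t q _ => (d1 t q).hasFDerivAt
  have h2 : ∀ p ∈ U, HasFDerivAt (fun p => ∫ t, fderiv ℝ (fun p => K p t) p ∂μ)
      (∫ t, fderiv ℝ (fderiv ℝ (fun p => K p t)) p ∂μ) p := by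
    intro p hp
    obtain ⟨V, hV, bound, hbi, hbd⟩ := hb p hp
    refine hasFDerivAt_integral_of_dominated_of_fderiv_le hV (Eventually.of_forall hm1) ?_ (hm2 p)
      (F' := fun p t => fderiv ℝ (fderiv ℝ (fun p => K p t)) p) (bound := bound) ?_ hbi ?_
    · exact hbi.mono' (hm1 p) (hbd.mono fun t ht => (ht p (mem_of_mem_nhds hV)).2.1)
    · exact hbd.mono fun t ht q hq => (ht q hq).2.2
    · exact Eventually.of_forall fun t q _ => (d2 t q).hasFDerivAt
  have h3 : ContinuousOn (fun p => ∫ t, fderiv ℝ (fderiv ℝ (fun p => K p t)) p ∂μ) U := by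
    intro p hp
    obtain ⟨V, hV, bound, hbi, hbd⟩ := hb p hp
    refine ContinuousAt.continuousWithinAt ?_
    refine continuousAt_of_dominated (bound := bound) (Eventually.of_forall hm2) ?_ hbi ?_
    · filter_upwards [hV] with q hq
      exact hbd.mono fun t ht => (ht q hq).2.2
    · exact Eventually.of_forall fun t => (c2 t).continuousAt
  have e2 : (2 : WithTop ℕ∞) = 1 + 1 := by norm_num
  have e1 : (1 : WithTop ℕ∞) = 0 + 1 := by norm_num
  rw [e2, contDiffOn_succ_iff_fderiv_of_isOpen hU]
  refine ⟨fun p hp => (h1 p hp).differentiableAt.differentiableWithinAt, by simp, ?_⟩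
  have : ContDiffOn ℝ 1 (fun p => ∫ t, fderiv ℝ (fun p => K p t) p ∂μ) U := by
    rw [e1, contDiffOn_succ_iff_fderiv_of_isOpen hU]
    refine ⟨fun p hp => (h2 p hp).differentiableAt.differentiableWithinAt, by simp, ?_⟩
    rw [contDiffOn_zero]
    exact h3.congr fun p hp => (h2 p hp).fderiv
  exact this.congr fun p hp => (h1 p hp).fderiv

/-- log/power bound -/
theorem log_pow_bound {a : ℝ} (ha : 0 < a) {q t : ℝ} (hq : a ≤ q) (hq2 : q ≤ 2) (ht : 0 < t)
    {k : ℕ} (hk : k ≤ 3) :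
    |Real.log t| ^ k * t ^ q ≤ (1 + 3 / a) ^ 3 * (1 + t) ^ 5 := by
  have hC : 1 ≤ (1 + 3 / a) := by have : 0 < 3 / a := by positivity
                                  linarith
  have hC3 : 1 ≤ (1 + 3 / a) ^ 3 := one_le_pow₀ hC
  have hT : 1 ≤ (1 + t) ^ 5 := one_le_pow₀ (by linarith)
  rcases le_total t 1 with h1 | h1
  · have hl := (Real.abs_log_mul_self_rpow_lt t (a / 3) ht h1 (by positivity)).le
    have htp : 0 < t ^ (a / 3) := Real.rpow_pos_of_pos ht _
    have htp1 : t ^ (a / 3) ≤ 1 := Real.rpow_le_one ht.le h1 (by positivity)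
    rw [abs_mul, abs_of_pos htp] at hl
    have hta : t ^ q ≤ (t ^ (a / 3)) ^ 3 := by
      rw [← Real.rpow_natCast, ← Real.rpow_mul ht.le]
      apply Real.rpow_le_rpow_of_exponent_ge ht h1
      push_cast; linarith
    have hta' : (t ^ (a / 3)) ^ 3 ≤ (t ^ (a / 3)) ^ k := pow_le_pow_of_le_one htp.le htp1 hk
    calc |Real.log t| ^ k * t ^ q ≤ |Real.log t| ^ k * (t ^ (a / 3)) ^ k := by gcongr; linarith
      _ = (|Real.log t| * t ^ (a / 3)) ^ k := by rw [mul_pow]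
      _ ≤ (1 + 3 / a) ^ k := by
        gcongr
        refine hl.trans ?_
        rw [one_div_div]; linarith
      _ ≤ (1 + 3 / a) ^ 3 := pow_le_pow_right₀ hC hk
      _ ≤ (1 + 3 / a) ^ 3 * (1 + t) ^ 5 := by nlinarith
  · have hl0 : 0 ≤ Real.log t := Real.log_nonneg h1
    have hl : Real.log t ≤ 1 + t := by
      have := Real.log_le_sub_one_of_pos ht; linarith
    have hq' : t ^ q ≤ (1 + t) ^ 2 := by
      calc t ^ q ≤ t ^ (2:ℝ) := Real.rpow_le_rpow_of_exponent_le h1 hq2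
        _ = t ^ 2 := by norm_num
        _ ≤ (1 + t) ^ 2 := by gcongr; linarith
    rw [abs_of_nonneg hl0]
    calc Real.log t ^ k * t ^ q ≤ (1 + t) ^ k * (1 + t) ^ 2 := by gcongr
      _ ≤ (1 + t) ^ 3 * (1 + t) ^ 2 := by gcongr; linarith
      _ = (1 + t) ^ 5 := by ring
      _ ≤ _ := by nlinarith

noncomputable def EE : ℝ → ℝ := ProbabilityTheory.mgf id (volume.restrict (Set.Icc (0:ℝ) 1))

theorem EE_set : ProbabilityTheory.integrableExpSet id (volume.restrict (Set.Icc (0:ℝ) 1)) =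
    Set.univ := by
  ext t
  simp only [ProbabilityTheory.integrableExpSet, Set.mem_ofPred_eq, Set.mem_univ, iff_true, id]
  exact Continuous.integrableOn_Icc (by fun_prop)

theorem EE_contDiff {n : WithTop ℕ∞} : ContDiff ℝ n EE := by
  have : AnalyticOnNhd ℝ EE Set.univ := by
    have := ProbabilityTheory.analyticOnNhd_mgf (X := (id : ℝ → ℝ))
      (μ := volume.restrict (Set.Icc (0:ℝ) 1))
    rwa [EE_set, interior_univ] at this
  exact (contDiffOn_univ.1 (this.contDiffOn uniqueDiffOn_univ))

theorem EE_iter (n : ℕ) (z : ℝ) : |iteratedDeriv n EE z| ≤ 1 + Real.exp z := by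
  have := ProbabilityTheory.iteratedDeriv_mgf (X := (id : ℝ → ℝ))
      (μ := volume.restrict (Set.Icc (0:ℝ) 1)) (t := z) (by simp [EE_set]) n
  unfold EE
  rw [this, ← Real.norm_eq_abs]
  have := norm_setIntegral_le_of_norm_le_const (μ := volume) (s := Set.Icc (0:ℝ) 1)
    (f := fun x => id x ^ n * Real.exp (z * id x)) (C := 1 + Real.exp z) (by simp) (by
      intro x hx
      have h1 : x ^ n ≤ 1 := pow_le_one₀ hx.1 hx.2
      have h0 : 0 ≤ x ^ n := pow_nonneg hx.1 n
      have h2 : Real.exp (z * x) ≤ 1 + Real.exp z := by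
        rcases le_total 0 z with hz | hz
        · have : Real.exp (z * x) ≤ Real.exp z := Real.exp_le_exp.2 (by nlinarith [hx.2])
          linarith
        · have : Real.exp (z * x) ≤ 1 := Real.exp_le_one_iff.2 (by nlinarith [hx.1])
          linarith [Real.exp_pos z]
      simp only [id, norm_mul, norm_pow, Real.norm_eq_abs, abs_of_nonneg hx.1, Real.abs_exp]
      nlinarith [Real.exp_pos (z * x)])
  simpa using this

theorem EE_eq (z : ℝ) : z * EE z = Real.exp z - 1 := by
  have : EE z = ∫ x in (0:ℝ)..1, Real.exp (z * x) := by
    rw [intervalIntegral.integral_of_le zero_le_one, ← integral_Icc_eq_integral_Ioc]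
    rfl
  rcases eq_or_ne z 0 with rfl | hz
  · simp
  · rw [this, intervalIntegral.integral_comp_mul_left (fun x => Real.exp x) hz]
    simp
    field_simp

theorem EE_zero : EE 0 = 1 := by
  simp [EE, ProbabilityTheory.mgf]

theorem norm_iter_comp {H : Type} [NormedAddCommGroup H] [NormedSpace ℝ H] (l : H →L[ℝ] ℝ)
    (hl : ‖l‖ ≤ 1) {q : ℝ → ℝ} (hq : ContDiff ℝ 2 q) (p : H) {n : ℕ} (hn : n ≤ 2) :
    ‖iteratedFDeriv ℝ n (fun p => q (l p)) p‖ ≤ |iteratedDeriv n q (l p)| := by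
  have := l.iteratedFDeriv_comp_right hq p (i := n) (by exact_mod_cast hn)
  have e : (fun p => q (l p)) = q ∘ l := rfl
  rw [e, this]
  refine (ContinuousMultilinearMap.norm_compContinuousLinearMap_le _ _).trans ?_
  rw [norm_iteratedFDeriv_eq_norm_iteratedDeriv, Real.norm_eq_abs]
  simp only [Finset.prod_const, Finset.card_univ, Fintype.card_fin]
  have : ‖l‖ ^ n ≤ 1 := pow_le_one₀ (norm_nonneg _) hl
  nlinarith [abs_nonneg (iteratedDeriv n q (l p))]

abbrev HH := ℝ × ℝ × ℝ

noncomputable def wre (s : ℝ) (p : HH) : ℝ := -Real.exp (s * p.2.1)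
noncomputable def wim (s : ℝ) (p : HH) : ℝ :=
  Real.exp s * p.1 + p.2.2 * ((s * Real.exp s) * EE (-s + s * p.2.1))
noncomputable def ww (s : ℝ) (p : HH) : ℂ := (wre s p : ℂ) + Complex.I * (wim s p : ℂ)
noncomputable def KK (s : ℝ) (p : HH) : ℂ := Complex.exp (ww s p)

theorem KK_contDiff {n : WithTop ℕ∞} : ContDiff ℝ n (Function.uncurry KK) := by
  have h1 : ContDiff ℝ n (fun q : ℝ × HH => wre q.1 q.2) := by unfold wre; fun_prop
  have h2 : ContDiff ℝ n (fun q : ℝ × HH => wim q.1 q.2) := by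
    unfold wim
    have := EE_contDiff (n := n)
    fun_prop
  have : ContDiff ℝ n (fun q : ℝ × HH =>
      Complex.exp (Complex.ofRealCLM (wre q.1 q.2) + Complex.I * Complex.ofRealCLM (wim q.1 q.2))) := by
    have e := Complex.ofRealCLM.contDiff (n := n)
    have := e.comp h1
    have := e.comp h2
    refine ContDiff.cexp (ContDiff.add (by assumption) (ContDiff.mul contDiff_const (by assumption)))
  exact this

theorem wre_contDiff (s : ℝ) {n : WithTop ℕ∞} : ContDiff ℝ n (wre s) := by
  unfold wre; fun_prop
theorem wim_contDiff (s : ℝ) {n : WithTop ℕ∞} : ContDiff ℝ n (wim s) := by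
  unfold wim
  have := EE_contDiff (n := n)
  fun_prop
theorem ww_contDiff (s : ℝ) {n : WithTop ℕ∞} : ContDiff ℝ n (ww s) := by
  have e := Complex.ofRealCLM.contDiff (n := n)
  exact ContDiff.add (e.comp (wre_contDiff s)) (ContDiff.mul contDiff_const (e.comp (wim_contDiff s)))

noncomputable def l1 : HH →L[ℝ] ℝ := ContinuousLinearMap.fst ℝ ℝ (ℝ × ℝ)
noncomputable def l2 : HH →L[ℝ] ℝ := (ContinuousLinearMap.fst ℝ ℝ ℝ).comp (ContinuousLinearMap.snd ℝ ℝ (ℝ × ℝ))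
noncomputable def l3 : HH →L[ℝ] ℝ := (ContinuousLinearMap.snd ℝ ℝ ℝ).comp (ContinuousLinearMap.snd ℝ ℝ (ℝ × ℝ))

theorem l1n : ‖l1‖ ≤ 1 := ContinuousLinearMap.norm_fst_le _ _ _
theorem l2n : ‖l2‖ ≤ 1 := by
  refine (ContinuousLinearMap.opNorm_comp_le _ _).trans ?_
  exact mul_le_one₀ (ContinuousLinearMap.norm_fst_le _ _ _) (norm_nonneg _) (ContinuousLinearMap.norm_snd_le _ _ _)
theorem l3n : ‖l3‖ ≤ 1 := by
  refine (ContinuousLinearMap.opNorm_comp_le _ _).trans ?_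
  exact mul_le_one₀ (ContinuousLinearMap.norm_snd_le _ _ _) (norm_nonneg _) (ContinuousLinearMap.norm_snd_le _ _ _)

theorem iter_lin (c x : ℝ) {n : ℕ} (hn : 1 ≤ n) : |iteratedDeriv n (fun x : ℝ => c * x) x| ≤ |c| := by
  match n, hn with
  | 1, _ => 
    rw [iteratedDeriv_one]
    have : deriv (fun x : ℝ => c * x) x = c := by simp
    rw [this]
  | (k+2), _ =>
    have : deriv (fun x : ℝ => c * x) = fun _ => c := by
      funext x; simp
    rw [iteratedDeriv_succ', this, iteratedDeriv_const]
    simp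

theorem mm_iter (s x : ℝ) (n : ℕ) :
    |iteratedDeriv n (fun x : ℝ => (s * Real.exp s) * EE (-s + s * x)) x| ≤
      |s| ^ (n + 1) * (Real.exp s + Real.exp (s * x)) := by
  rw [iteratedDeriv_const_mul_field]
  have h : ContDiff ℝ n (fun z => EE (-s + z)) := by
    have := EE_contDiff (n := n)
    fun_prop
  have := iteratedDeriv_comp_const_mul h s
  rw [this, iteratedDeriv_comp_const_add]
  have hE := EE_iter n (-s + s * x)
  rw [abs_mul, abs_mul, abs_mul, abs_pow, Real.abs_exp]
  calc |s| * Real.exp s * (|s| ^ n * |iteratedDeriv n EE (-s + s * x)|)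
      ≤ |s| * Real.exp s * (|s| ^ n * (1 + Real.exp (-s + s * x))) := by gcongr
    _ = |s| ^ (n + 1) * (Real.exp s + Real.exp s * Real.exp (-s + s * x)) := by ring
    _ = _ := by rw [← Real.exp_add]; ring_nf

theorem ww_bound {a M t : ℝ} (ha : 0 < a) (ha1 : a ≤ 1) (hM : 0 ≤ M) (ht : 0 < t) {p : HH}
    (hp : a ≤ p.2.1) (hp2 : p.2.1 ≤ 2) (hpM : |p.2.2| ≤ M) {n : ℕ} (hn1 : 1 ≤ n) (hn2 : n ≤ 2) :
    ‖iteratedFDeriv ℝ n (ww (Real.log t)) p‖ ≤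
      (20 * (1 + M) * (1 + 3 / a) ^ 3) * (1 + t) ^ 5 := by
  set s := Real.log t with hs
  have hes : Real.exp s = t := Real.exp_log ht
  have hesx : ∀ x : ℝ, Real.exp (s * x) = t ^ x := fun x => by
    rw [Real.rpow_def_of_pos ht]
  set B := (1 + 3 / a) ^ 3 * (1 + t) ^ 5 with hB
  have hB1 : (1 + t) ^ 5 ≤ B := by
    have hC : 1 ≤ (1 + 3 / a) := by have : 0 < 3 / a := by positivity
                                    linarith
    have hC3 : 1 ≤ (1 + 3 / a) ^ 3 := one_le_pow₀ hC
    have : 0 ≤ (1 + t) ^ 5 := by positivity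
    nlinarith
  have hB0 : 0 ≤ B := by positivity
  have hlb : ∀ {q : ℝ} {k : ℕ}, a ≤ q → q ≤ 2 → k ≤ 3 → |s| ^ k * t ^ q ≤ B :=
    fun h1 h2 h3 => log_pow_bound ha h1 h2 ht h3
  have b1 : ‖iteratedFDeriv ℝ n (wre s) p‖ ≤ B := by
    have e : wre s = fun p => (fun x => - Real.exp (s * x)) (l2 p) := rfl
    rw [e]
    refine (norm_iter_comp l2 l2n (q := fun x => - Real.exp (s * x)) (by fun_prop) p hn2).trans ?_
    have := iteratedDeriv_fun_neg n (fun x => Real.exp (s * x)) (l2 p)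
    rw [this, iteratedDeriv_exp_const_mul]
    have hl : l2 p = p.2.1 := rfl
    simp only [abs_neg, abs_mul, abs_pow, Real.abs_exp]
    rw [hesx, hl]
    exact hlb hp hp2 (by omega)
  have b2 : ‖iteratedFDeriv ℝ n (fun p : HH => Real.exp s * p.1) p‖ ≤ B := by
    have e : (fun p : HH => Real.exp s * p.1) = fun p => (fun x => Real.exp s * x) (l1 p) := rfl
    rw [e]
    refine (norm_iter_comp l1 l1n (q := fun x => Real.exp s * x) (by fun_prop) p hn2).trans ?_
    refine (iter_lin _ _ hn1).trans ?_
    rw [hes, abs_of_pos ht]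
    refine le_trans ?_ hB1
    have : 1 + t ≤ (1 + t) ^ 5 := le_self_pow₀ (by linarith) (by norm_num)
    linarith
  have hm : ∀ j ≤ 2, ‖iteratedFDeriv ℝ j (fun p : HH => (s * Real.exp s) * EE (-s + s * p.2.1)) p‖
      ≤ 2 * B := by
    intro j hj
    have e : (fun p : HH => (s * Real.exp s) * EE (-s + s * p.2.1)) =
      fun p => (fun x => (s * Real.exp s) * EE (-s + s * x)) (l2 p) := rfl
    have := EE_contDiff (n := 2)
    rw [e]
    refine (norm_iter_comp l2 l2n (q := fun x => (s * Real.exp s) * EE (-s + s * x)) (by fun_prop) p hj).trans ?_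
    refine (mm_iter _ _ _).trans ?_
    have hl : l2 p = p.2.1 := rfl
    rw [hl, hesx, hes]
    have i1 := hlb (q := p.2.1) (k := j + 1) hp hp2 (by omega)
    have i2 := hlb (q := 1) (k := j + 1) ha1 (by norm_num) (by omega)
    rw [Real.rpow_one] at i2
    rw [mul_add]; linarith
  have hc : ∀ j ≤ 2, ‖iteratedFDeriv ℝ j (fun p : HH => p.2.2) p‖ ≤ 1 + M := by
    intro j hj
    have e : (fun p : HH => p.2.2) = fun p => (fun x : ℝ => x) (l3 p) := rfl
    rcases Nat.eq_zero_or_pos j with rfl | hj1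
    · rw [norm_iteratedFDeriv_zero, Real.norm_eq_abs]; linarith
    · rw [e]
      refine (norm_iter_comp l3 l3n (q := fun x => x) (by fun_prop) p hj).trans ?_
      have := iter_lin 1 (l3 p) hj1
      simp only [one_mul, abs_one] at this
      linarith
  have b3 : ‖iteratedFDeriv ℝ n (fun p : HH => p.2.2 * ((s * Real.exp s) * EE (-s + s * p.2.1))) p‖
      ≤ 8 * (1 + M) * B := by
    have := EE_contDiff (n := 2)
    refine (norm_iteratedFDeriv_mul_le (N := 2) (by fun_prop) (by fun_prop) p (by exact_mod_cast hn2)).trans ?_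
    have : ∀ i ∈ Finset.range (n + 1), (n.choose i : ℝ) * ‖iteratedFDeriv ℝ i (fun p : HH => p.2.2) p‖ *
        ‖iteratedFDeriv ℝ (n - i) (fun p : HH => (s * Real.exp s) * EE (-s + s * p.2.1)) p‖ ≤
        (n.choose i : ℝ) * ((1 + M) * (2 * B)) := by
      intro i hi
      rw [Finset.mem_range] at hi
      rw [mul_assoc]
      gcongr
      · exact hc i (by omega)
      · exact hm _ (by omega)
    refine (Finset.sum_le_sum this).trans ?_
    rw [← Finset.sum_mul]
    have h2 : (∑ i ∈ Finset.range (n + 1), (n.choose i : ℝ)) ≤ 4 := by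
      have := Nat.sum_range_choose n
      have h : (∑ i ∈ Finset.range (n + 1), (n.choose i : ℝ)) = ((2 ^ n : ℕ) : ℝ) := by
        rw [← this]; push_cast; rfl
      rw [h]
      have : 2 ^ n ≤ 2 ^ 2 := Nat.pow_le_pow_right (by norm_num) hn2
      exact_mod_cast this
    have h3 : 0 ≤ (1 + M) * (2 * B) := by positivity
    nlinarith
  have b4 : ‖iteratedFDeriv ℝ n (wim s) p‖ ≤ B + 8 * (1 + M) * B := by
    have e : wim s = fun p : HH => (fun p : HH => Real.exp s * p.1) p +
      (fun p : HH => p.2.2 * ((s * Real.exp s) * EE (-s + s * p.2.1))) p := rfl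
    have := EE_contDiff (n := n)
    rw [e, fun_iteratedFDeriv_add_apply (by fun_prop) (by fun_prop)]
    exact (norm_add_le _ _).trans (add_le_add b2 b3)
  let L2 : ℝ →L[ℝ] ℂ := ContinuousLinearMap.mul ℝ ℂ Complex.I ∘L Complex.ofRealCLM
  have hL2 : ‖L2‖ ≤ 1 := by
    refine ContinuousLinearMap.opNorm_le_bound _ zero_le_one fun x => ?_
    simp [L2]
  have e : ww s = fun p : HH => (fun p : HH => (Complex.ofRealCLM ∘ wre s) p) p + (fun p => (L2 ∘ wim s) p) p := rfl
  have c1 : ContDiffAt ℝ n (wre s) p := (wre_contDiff s).contDiffAt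
  have c2 : ContDiffAt ℝ n (wim s) p := (wim_contDiff s).contDiffAt
  rw [e, fun_iteratedFDeriv_add_apply (Complex.ofRealCLM.contDiff.contDiffAt.comp p c1)
    (L2.contDiff.contDiffAt.comp p c2)]
  refine (norm_add_le _ _).trans ?_
  have f1 := Complex.ofRealCLM.norm_iteratedFDeriv_comp_left c1 (n := n) le_rfl
  have f2 := L2.norm_iteratedFDeriv_comp_left c2 (n := n) le_rfl
  rw [Complex.ofRealCLM_norm, one_mul] at f1
  have f3 : ‖L2‖ * ‖iteratedFDeriv ℝ n (wim s) p‖ ≤ 1 * ‖iteratedFDeriv ℝ n (wim s) p‖ := by gcongr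
  have : 20 * (1 + M) * (1 + 3 / a) ^ 3 * (1 + t) ^ 5 = 20 * (1 + M) * B := by rw [hB]; ring
  rw [this]
  have : 0 ≤ M * B := by positivity
  change ‖iteratedFDeriv ℝ n (Complex.ofRealCLM ∘ wre s) p‖ + ‖iteratedFDeriv ℝ n (L2 ∘ wim s) p‖ ≤ _
  nlinarith

theorem KK_d1 (s : ℝ) (p : HH) : HasFDerivAt (KK s) (KK s p • fderiv ℝ (ww s) p) p :=
  (((ww_contDiff s (n := 1)).differentiable (by norm_num)) p).hasFDerivAt.cexp

theorem KK_bound {a M t : ℝ} (ha : 0 < a) (ha1 : a ≤ 1) (hM : 0 ≤ M) (ht : 0 < t) {p : HH}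
    (hp : a ≤ p.2.1) (hp2 : p.2.1 ≤ 2) (hpM : |p.2.2| ≤ M) :
    ‖KK (Real.log t) p‖ ≤ (1 + t) ^ 10 * Real.exp (1 - t ^ a) ∧
    ‖fderiv ℝ (KK (Real.log t)) p‖ ≤ (20 * (1 + M) * (1 + 3 / a) ^ 3) * ((1 + t) ^ 10 * Real.exp (1 - t ^ a)) ∧
    ‖fderiv ℝ (fderiv ℝ (KK (Real.log t))) p‖ ≤
      2 * (20 * (1 + M) * (1 + 3 / a) ^ 3) ^ 2 * ((1 + t) ^ 10 * Real.exp (1 - t ^ a)) := by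
  set s := Real.log t with hs
  set C := 20 * (1 + M) * (1 + 3 / a) ^ 3 with hC
  have hC1 : 1 ≤ C := by
    have : 1 ≤ (1 + 3 / a) := by have : 0 < 3 / a := by positivity
                                 linarith
    have hC3 : 1 ≤ (1 + 3 / a) ^ 3 := one_le_pow₀ this
    nlinarith
  have hT : 1 ≤ (1 + t) ^ 5 := one_le_pow₀ (by linarith)
  have hT' : (1 + t) ^ 10 = (1 + t) ^ 5 * (1 + t) ^ 5 := by ring
  have n0 : ‖KK s p‖ ≤ Real.exp (1 - t ^ a) := by
    unfold KK
    rw [Complex.norm_exp]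
    have : (ww s p).re = - t ^ p.2.1 := by
      rw [Real.rpow_def_of_pos ht, ← hs]
      simp only [ww, wre, Complex.add_re, Complex.ofReal_re, Complex.mul_re, Complex.I_re,
        Complex.I_im, Complex.ofReal_im]
      ring
    rw [this]
    apply Real.exp_le_exp.2
    rcases le_total t 1 with h | h
    · have := Real.rpow_le_one ht.le h ha.le
      have := Real.rpow_pos_of_pos ht p.2.1
      linarith
    · have := Real.rpow_le_rpow_of_exponent_le h hp
      linarith
  have n1 : ‖fderiv ℝ (ww s) p‖ ≤ C * (1 + t) ^ 5 := by
    rw [← norm_iteratedFDeriv_one]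
    exact ww_bound ha ha1 hM ht hp hp2 hpM le_rfl (by norm_num)
  have n2 : ‖fderiv ℝ (fderiv ℝ (ww s)) p‖ ≤ C * (1 + t) ^ 5 := by
    rw [← norm_iteratedFDeriv_one, norm_iteratedFDeriv_fderiv]
    exact ww_bound ha ha1 hM ht hp hp2 hpM (by norm_num) (by norm_num)
  have e1 : fderiv ℝ (KK s) = fun p => KK s p • fderiv ℝ (ww s) p := funext fun p => (KK_d1 s p).fderiv
  have hX := Real.exp_pos (1 - t ^ a)
  refine ⟨n0.trans ?_, ?_, ?_⟩
  · exact le_mul_of_one_le_left hX.le (one_le_pow₀ (by linarith))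
  · rw [e1]
    simp only [norm_smul]
    calc _ ≤ Real.exp (1 - t ^ a) * (C * (1 + t) ^ 5) := by gcongr
      _ ≤ Real.exp (1 - t ^ a) * (C * (1 + t) ^ 10) := by gcongr <;> linarith
      _ = _ := by ring
  · have d2 : HasFDerivAt (fderiv ℝ (ww s)) (fderiv ℝ (fderiv ℝ (ww s)) p) p :=
      ((((ww_contDiff s (n := 2)).fderiv_right (m := 1) (by norm_num)).differentiable (by norm_num)) p).hasFDerivAt
    have := (KK_d1 s p).smul d2
    rw [e1]
    have e2 : (fun p => KK s p • fderiv ℝ (ww s) p) = KK s • fderiv ℝ (ww s) := rfl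
    rw [e2, this.fderiv]
    refine (norm_add_le (KK s p • fderiv ℝ (fderiv ℝ (ww s)) p : HH →L[ℝ] HH →L[ℝ] ℂ)
      ((KK s p • fderiv ℝ (ww s) p).smulRight (fderiv ℝ (ww s) p))).trans ?_
    have q1 : ‖(KK s p • fderiv ℝ (fderiv ℝ (ww s)) p : HH →L[ℝ] HH →L[ℝ] ℂ)‖ ≤
        ‖KK s p‖ * ‖fderiv ℝ (fderiv ℝ (ww s)) p‖ := by
      refine ContinuousLinearMap.opNorm_le_bound _ (by positivity) fun v => ?_
      change ‖KK s p • (fderiv ℝ (fderiv ℝ (ww s)) p v)‖ ≤ _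
      rw [norm_smul, mul_assoc]
      gcongr
      exact ContinuousLinearMap.le_opNorm _ _
    have q2 : ‖((KK s p • fderiv ℝ (ww s) p).smulRight (fderiv ℝ (ww s) p) : HH →L[ℝ] HH →L[ℝ] ℂ)‖ ≤
        ‖KK s p‖ * ‖fderiv ℝ (ww s) p‖ * ‖fderiv ℝ (ww s) p‖ := by
      refine ContinuousLinearMap.opNorm_le_bound _ (by positivity) fun v => ?_
      change ‖(KK s p * (fderiv ℝ (ww s) p v)) • fderiv ℝ (ww s) p‖ ≤ _
      rw [norm_smul, norm_mul]
      calc _ ≤ ‖KK s p‖ * (‖fderiv ℝ (ww s) p‖ * ‖v‖) * ‖fderiv ℝ (ww s) p‖ := by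
            gcongr; exact ContinuousLinearMap.le_opNorm _ _
        _ = _ := by ring
    refine (add_le_add q1 q2).trans ?_
    calc _ ≤ Real.exp (1 - t ^ a) * (C * (1 + t) ^ 5) + Real.exp (1 - t ^ a) * (C * (1 + t) ^ 5) * (C * (1 + t) ^ 5) := by gcongr
      _ ≤ Real.exp (1 - t ^ a) * (C * (1 + t) ^ 5) * (C * (1 + t) ^ 5) + Real.exp (1 - t ^ a) * (C * (1 + t) ^ 5) * (C * (1 + t) ^ 5) := by
        gcongr
        exact le_mul_of_one_le_right (by positivity) (by nlinarith)
      _ = _ := by ring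

theorem bound_integrable {a : ℝ} (ha : 0 < a) :
    Integrable (fun t : ℝ => (1 + t) ^ 10 * Real.exp (1 - t ^ a)) (volume.restrict (Set.Ioi 0)) := by
  have h0 := integrableOn_rpow_mul_exp_neg_rpow (p := a) (s := 0) (by norm_num) ha
  have h1 := integrableOn_rpow_mul_exp_neg_rpow (p := a) (s := 10) (by norm_num) ha
  have h := ((h0.add h1).const_mul (2 ^ 10 * Real.exp 1))
  refine Integrable.mono' h ?_ ?_
  · refine Measurable.aestronglyMeasurable ?_
    fun_prop
  · refine (ae_restrict_iff' measurableSet_Ioi).2 (Eventually.of_forall fun t ht => ?_)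
    have ht : 0 < t := ht
    rw [Real.norm_of_nonneg (by positivity)]
    have e : Real.exp (1 - t ^ a) = Real.exp 1 * Real.exp (- t ^ a) := by rw [← Real.exp_add]; ring_nf
    have e10 : t ^ (10 : ℝ) = t ^ (10:ℕ) := by exact_mod_cast Real.rpow_natCast t 10
    simp only [Pi.add_apply, Real.rpow_zero, one_mul, e, e10]
    have : (1 + t) ^ 10 ≤ 2 ^ 10 * (1 + t ^ 10) := by
      rcases le_total t 1 with h | h
      · have : (1 + t) ^ 10 ≤ 2 ^ 10 := by gcongr; linarith
        nlinarith [pow_pos ht 10]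
      · have : (1 + t) ^ 10 ≤ (2 * t) ^ 10 := by gcongr; linarith
        rw [mul_pow] at this; nlinarith
    have hx := Real.exp_pos 1
    have hy := Real.exp_pos (-t ^ a)
    calc (1 + t) ^ 10 * (Real.exp 1 * Real.exp (-t ^ a)) ≤ (2 ^ 10 * (1 + t ^ 10)) * (Real.exp 1 * Real.exp (-t ^ a)) := by gcongr
      _ = _ := by ring

noncomputable def hfun (p : HH) : ℂ := ∫ t in Set.Ioi (0:ℝ), KK (Real.log t) p

theorem hfun_contDiff : ContDiffOn ℝ 2 hfun {p : HH | 0 < p.2.1 ∧ p.2.1 < 2} := by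
  have hU : IsOpen {p : HH | 0 < p.2.1 ∧ p.2.1 < 2} :=
    IsOpen.and (isOpen_lt (by fun_prop) (by fun_prop)) (isOpen_lt (by fun_prop) (by fun_prop))
  have cc : ContDiff ℝ 3 (Function.uncurry KK) := KK_contDiff
  refine contDiffOn_two_integral hU (fun p t => KK (Real.log t) p) ?_ ?_ ?_ ?_ ?_
  · intro t
    exact (KK_contDiff (n := 2)).comp (contDiff_const.prodMk contDiff_id)
  · intro p
    have : Continuous (fun s => KK s p) :=
      ((KK_contDiff (n := 0)).continuous).comp (by fun_prop : Continuous fun s : ℝ => (s, p))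
    exact (this.measurable.comp Real.measurable_log).aestronglyMeasurable
  · intro p
    have : Continuous (fun s => fderiv ℝ (KK s) p) :=
      (ContDiff.fderiv (n := 0) (m := 1) KK_contDiff contDiff_const (by norm_num)).continuous
    exact (this.stronglyMeasurable.comp_measurable Real.measurable_log).aestronglyMeasurable
  · intro p
    have h1 : ContDiff ℝ 1 (Function.uncurry fun s p => fderiv ℝ (KK s) p) := by
      refine ContDiff.fderiv (n := 1) (m := 2) (f := fun (q : ℝ × HH) p => KK q.1 p) (g := fun q => q.2) ?_ (by fun_prop) (by norm_num)
      exact (KK_contDiff (n := 2)).comp (by fun_prop : ContDiff ℝ 2 fun q : (ℝ × HH) × HH => (q.1.1, q.2))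
    have : Continuous (fun s => fderiv ℝ (fderiv ℝ (KK s)) p) :=
      (ContDiff.fderiv (n := 0) (m := 1) h1 contDiff_const (by norm_num)).continuous
    exact (this.stronglyMeasurable.comp_measurable Real.measurable_log).aestronglyMeasurable
  · rintro p₀ ⟨h0, h2⟩
    set a := min 1 (p₀.2.1 / 2) with ha
    set M := |p₀.2.2| + 1 with hM
    have ha0 : 0 < a := lt_min one_pos (by linarith)
    have hap : a < p₀.2.1 := (min_le_right _ _).trans_lt (by linarith)
    set C := 20 * (1 + M) * (1 + 3 / a) ^ 3 with hC
    have hM0 : 0 ≤ M := by positivity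
    have hC1 : 1 ≤ C := by
      have : 1 ≤ (1 + 3 / a) := by have : 0 < 3 / a := by positivity
                                   linarith
      have hC3 : 1 ≤ (1 + 3 / a) ^ 3 := one_le_pow₀ this
      nlinarith
    refine ⟨{p : HH | a < p.2.1 ∧ p.2.1 < 2 ∧ |p.2.2| < M}, ?_, _, (bound_integrable ha0).const_mul (2 * C ^ 2), ?_⟩
    · refine IsOpen.mem_nhds ?_ ⟨hap, h2, by rw [hM]; linarith⟩
      exact IsOpen.and (isOpen_lt (by fun_prop) (by fun_prop))
        (IsOpen.and (isOpen_lt (by fun_prop) (by fun_prop)) (isOpen_lt (by fun_prop) (by fun_prop)))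
    · refine (ae_restrict_iff' measurableSet_Ioi).2 (Eventually.of_forall fun t ht p hp => ?_)
      have ht : 0 < t := ht
      obtain ⟨i1, i2, i3⟩ := KK_bound ha0 (min_le_left _ _) hM0 ht hp.1.le hp.2.1.le hp.2.2.le
      have hpos : 0 ≤ (1 + t) ^ 10 * Real.exp (1 - t ^ a) := by positivity
      refine ⟨i1.trans ?_, i2.trans ?_, i3⟩
      · exact le_mul_of_one_le_left hpos (by nlinarith)
      · exact mul_le_mul_of_nonneg_right (by nlinarith) hpos

noncomputable def Gf (a u : ℝ) : ℝ :=
  if a = 1 then 2 / Real.pi * u * Real.log u else Real.tan (Real.pi * a / 2) * (u - u ^ a)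

noncomputable def psi0 (a b t : ℝ) : ℂ :=
  ((-(|t| ^ a) : ℝ) : ℂ) - Complex.I * ((b * Real.sign t * Gf a |t| : ℝ) : ℂ)

theorem Gf_zero {a : ℝ} (ha : 0 < a) : Gf a 0 = 0 := by
  unfold Gf; split_ifs <;> simp [Real.zero_rpow ha.ne']

theorem sign_mul_abs' (t : ℝ) : Real.sign t * |t| = t := by
  rcases lt_trichotomy t 0 with h | h | h
  · rw [Real.sign_of_neg h, abs_of_neg h]; ring
  · simp [h]
  · rw [Real.sign_of_pos h, abs_of_pos h]; ring

theorem psiM_eq {θ : Fin 4 → ℝ} (hθ : θ ∈ ThetaInt) (t : ℝ) :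
    psiM θ t = psi0 (θ 2) (θ 3) (θ 1 * t) + Complex.I * ((θ 0 * t : ℝ) : ℂ) := by
  obtain ⟨hs, ⟨ha, _⟩, _⟩ := hθ
  have hsg : Real.sign (θ 1 * t) = Real.sign t := by
    rcases lt_trichotomy t 0 with h | h | h
    · rw [Real.sign_of_neg h, Real.sign_of_neg (mul_neg_of_pos_of_neg hs h)]
    · simp [h]
    · rw [Real.sign_of_pos h, Real.sign_of_pos (mul_pos hs h)]
  unfold psiM psi0 Gf
  split_ifs with h
  · rw [h, Real.rpow_one]
    congr 4
    have := sign_mul_abs' (θ 1 * t)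
    calc _ = 2 * θ 3 / Real.pi * (Real.sign (θ 1 * t) * |θ 1 * t|) * Real.log |θ 1 * t| := by rw [this]
      _ = _ := by ring
  · rw [hsg]
    congr 1
    rcases eq_or_ne t 0 with rfl | ht
    · simp
    · have hpos : 0 < |θ 1 * t| := abs_pos.2 (mul_ne_zero hs.ne' ht)
      have : |θ 1 * t| ^ θ 2 * |θ 1 * t| ^ (1 - θ 2) = |θ 1 * t| := by
        rw [← Real.rpow_add hpos]; simp
      have h2 : |θ 1 * t| - |θ 1 * t| ^ θ 2 = |θ 1 * t| ^ θ 2 * (|θ 1 * t| ^ (1 - θ 2) - 1) := by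
        rw [mul_sub, this, mul_one]
      rw [h2]
      push_cast
      ring

noncomputable def QQ (a b y u : ℝ) : ℂ := Complex.exp (-Complex.I * (u : ℂ) * (y : ℂ)) * Complex.exp (psi0 a b u)

noncomputable def Fh (a b y : ℝ) : ℝ := (∫ u : ℝ, QQ a b y u).re

theorem fM_eq {θ : Fin 4 → ℝ} (hθ : θ ∈ ThetaInt) (x : ℝ) :
    fM θ x = (1 / (2 * Real.pi)) * ((θ 1)⁻¹ * Fh (θ 2) (θ 3) ((x - θ 0) / θ 1)) := by
  have hs := hθ.1
  unfold fM Fh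
  have : ∀ t : ℝ, Complex.exp (-Complex.I * (t : ℂ) * (x : ℂ)) * phiM θ t =
      QQ (θ 2) (θ 3) ((x - θ 0) / θ 1) (θ 1 * t) := by
    intro t
    have hs' : (θ 1 : ℂ) ≠ 0 := by exact_mod_cast hs.ne'
    unfold phiM QQ
    rw [psiM_eq hθ, ← Complex.exp_add, ← Complex.exp_add]
    congr 1
    push_cast
    field_simp
    ring
  simp_rw [this]
  rw [Measure.integral_comp_mul_left (QQ (θ 2) (θ 3) ((x - θ 0) / θ 1)), abs_of_pos (inv_pos.2 hs)]
  simp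

theorem measurable_sign' : Measurable Real.sign := by
  unfold Real.sign
  exact Measurable.ite measurableSet_Iio measurable_const
    (Measurable.ite measurableSet_Ioi measurable_const measurable_const)

theorem psi0_meas (a b : ℝ) : Measurable (psi0 a b) := by
  have h1 : Measurable (Gf a) := by
    unfold Gf
    split_ifs
    · fun_prop
    · fun_prop
  have h2 := measurable_sign'
  unfold psi0
  fun_prop

theorem norm_exp_psi0 (a b t : ℝ) : ‖Complex.exp (psi0 a b t)‖ = Real.exp (-(|t| ^ a)) := by
  rw [Complex.norm_exp]
  simp only [psi0, Complex.sub_re, Complex.ofReal_re, Complex.mul_re, Complex.I_re,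
        Complex.I_im, Complex.ofReal_im]
  congr 1; ring

theorem integrable_exp_abs {a : ℝ} (ha : 0 < a) : Integrable (fun t : ℝ => Real.exp (-(|t| ^ a))) := by
  by_contra h
  have h1 := integral_comp_abs (f := fun t => Real.exp (-(t ^ a)))
  rw [integral_undef h, integral_exp_neg_rpow ha] at h1
  have := Real.Gamma_pos_of_pos (s := 1 / a + 1) (by positivity)
  linarith

theorem integrable_exp_psi0 {a : ℝ} (ha : 0 < a) (b : ℝ) :
    Integrable (fun t : ℝ => Complex.exp (psi0 a b t)) := by
  refine (integrable_exp_abs ha).mono' (psi0_meas a b).cexp.aestronglyMeasurable ?_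
  exact Eventually.of_forall fun t => (norm_exp_psi0 a b t).le

theorem integrable_QQ {a : ℝ} (ha : 0 < a) (b y : ℝ) : Integrable (QQ a b y) := by
  refine (integrable_exp_abs ha).mono' ?_ ?_
  · exact (Measurable.mul (by fun_prop) (psi0_meas a b).cexp).aestronglyMeasurable
  · refine Eventually.of_forall fun t => ?_
    unfold QQ
    rw [norm_mul, norm_exp_psi0]
    have : -Complex.I * (t : ℂ) * (y : ℂ) = ((-(t * y) : ℝ) : ℂ) * Complex.I := by push_cast; ring
    rw [this, Complex.norm_exp_ofReal_mul_I, one_mul]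

noncomputable def SS (x : ℝ) : ℝ := (dslope Complex.sin 0 (x : ℂ)).re

theorem SS_contDiff {n : WithTop ℕ∞} : ContDiff ℝ n SS := by
  have h : Differentiable ℂ (dslope Complex.sin 0) := by
    rw [← differentiableOn_univ, Complex.differentiableOn_dslope univ_mem]
    exact Complex.differentiable_sin.differentiableOn
  exact h.contDiff.real_of_complex

theorem SS_zero : SS 0 = 1 := by simp [SS, dslope_same]

theorem SS_mul (x : ℝ) : x * SS x = Real.sin x := by
  have := sub_smul_dslope Complex.sin 0 (x : ℂ)
  simp only [sub_zero, smul_eq_mul, Complex.sin_zero] at this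
  have h := congrArg Complex.re this
  rw [Complex.re_ofReal_mul] at h
  rw [SS, h]
  exact Complex.sin_ofReal_re x

noncomputable def cf (a : ℝ) : ℝ :=
  Real.cos (Real.pi * (1 - a) / 2) / (Real.pi / 2 * SS (Real.pi * (1 - a) / 2))

theorem SS_ne {a : ℝ} (ha : 0 < a) (ha2 : a < 2) : SS (Real.pi * (1 - a) / 2) ≠ 0 := by
  intro h
  have h1 := SS_mul (Real.pi * (1 - a) / 2)
  rw [h, mul_zero] at h1
  have hp := Real.pi_pos
  have := (Real.sin_eq_zero_iff_of_lt_of_lt (by nlinarith) (by nlinarith)).1 h1.symm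
  rw [this, SS_zero] at h
  norm_num at h

theorem cf_contDiff : ContDiffOn ℝ 2 cf (Set.Ioo 0 2) := by
  unfold cf
  have := SS_contDiff (n := 2)
  refine ContDiffOn.div (by fun_prop) (by fun_prop) ?_
  intro a ha
  exact mul_ne_zero (by positivity) (SS_ne ha.1 ha.2)

theorem Gf_eq {a t : ℝ} (ha : 0 < a) (ha2 : a < 2) (ht : 0 < t) :
    Gf a t = cf a * ((Real.log t * Real.exp (Real.log t)) * EE (-Real.log t + Real.log t * a)) := by
  unfold Gf
  have hp := Real.pi_pos
  split_ifs with h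
  · subst h
    simp [cf, SS_zero, EE_zero, Real.exp_log ht]
    ring
  · have h1 : a - 1 ≠ 0 := sub_ne_zero.2 h
    have h1' : 1 - a ≠ 0 := sub_ne_zero.2 (Ne.symm h)
    have hE := EE_eq (-Real.log t + Real.log t * a)
    have hE1 : Real.exp (Real.log t) * Real.exp (-Real.log t + Real.log t * a) = t ^ a := by
      rw [← Real.exp_add, Real.rpow_def_of_pos ht]; ring_nf
    have hEE : Real.log t * Real.exp (Real.log t) * EE (-Real.log t + Real.log t * a) =
        (t ^ a - t) / (a - 1) := by
      rw [eq_div_iff h1]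
      calc _ = Real.exp (Real.log t) * ((-Real.log t + Real.log t * a) * EE (-Real.log t + Real.log t * a)) := by ring
        _ = t ^ a - Real.exp (Real.log t) := by rw [hE, mul_sub, hE1, mul_one]
        _ = _ := by rw [Real.exp_log ht]
    have hc : cf a = (1 - a) * Real.tan (Real.pi * a / 2) := by
      have hS := SS_ne ha ha2
      have hx := SS_mul (Real.pi * (1 - a) / 2)
      have e : Real.pi * a / 2 = Real.pi / 2 - Real.pi * (1 - a) / 2 := by ring
      rw [e, Real.tan_eq_sin_div_cos, Real.sin_pi_div_two_sub, Real.cos_pi_div_two_sub, ← hx]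
      unfold cf
      field_simp
    rw [hEE, hc]
    field_simp
    ring

theorem Fh_eq {a : ℝ} (ha : 0 < a) (ha2 : a < 2) (b y : ℝ) :
    Fh a b y = 2 * (hfun (y, a, b * cf a)).re := by
  unfold Fh hfun
  have e1 : ∀ u : ℝ, (QQ a b y u).re = (fun u => Real.exp (-(u ^ a)) * Real.cos (u * y + b * Gf a u)) |u| := by
    intro u
    have : QQ a b y u = Complex.exp (((-(|u| ^ a) : ℝ) : ℂ) +
        ((-(u * y + b * Real.sign u * Gf a |u|) : ℝ) : ℂ) * Complex.I) := by
      unfold QQ psi0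
      rw [← Complex.exp_add]; congr 1; push_cast; ring
    rw [this, Complex.exp_re]
    simp only [Complex.add_re, Complex.ofReal_re, Complex.mul_re, Complex.I_re, Complex.add_im,
        Complex.I_im, Complex.ofReal_im, Complex.mul_im]
    congr 1
    · congr 1; ring
    · rcases lt_trichotomy u 0 with h | h | h
      · rw [Real.sign_of_neg h, abs_of_neg h]; congr 1; ring
      · simp [h, Gf_zero ha]
      · rw [Real.sign_of_pos h, abs_of_pos h, ← Real.cos_neg]; congr 1; ring
  have e2 : ∀ t ∈ Set.Ioi (0:ℝ), Real.exp (-(t ^ a)) * Real.cos (t * y + b * Gf a t) =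
      (KK (Real.log t) (y, a, b * cf a)).re := by
    intro t ht
    have ht : 0 < t := ht
    unfold KK ww wre wim
    rw [Complex.exp_re]
    simp only [Complex.add_re, Complex.ofReal_re, Complex.mul_re, Complex.I_re, Complex.add_im,
        Complex.I_im, Complex.ofReal_im, Complex.mul_im]
    rw [Real.rpow_def_of_pos ht, Gf_eq ha ha2 ht]
    congr 1
    · congr 1; ring
    · congr 1
      rw [Real.exp_log ht]
      ring
  have hint : IntegrableOn (fun t => KK (Real.log t) (y, a, b * cf a)) (Set.Ioi 0) := by
    have ha0 : 0 < min 1 a := lt_min one_pos ha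
    refine Integrable.mono' (bound_integrable ha0) ?_ ?_
    · have : Continuous (fun s => KK s (y, a, b * cf a)) :=
        ((KK_contDiff (n := 0)).continuous).comp
          (by fun_prop : Continuous fun s : ℝ => (s, ((y, a, b * cf a) : HH)))
      exact (this.measurable.comp Real.measurable_log).aestronglyMeasurable
    · refine (ae_restrict_iff' measurableSet_Ioi).2 (Eventually.of_forall fun t ht => ?_)
      exact (KK_bound ha0 (min_le_left _ _) (abs_nonneg (b * cf a)) ht (p := (y, a, b * cf a))
        (min_le_right _ _) ha2.le le_rfl).1
  have r1 : (∫ u : ℝ, QQ a b y u).re = ∫ u : ℝ, (QQ a b y u).re :=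
    (integral_re (𝕜 := ℂ) (integrable_QQ ha b y)).symm
  have r2 : (∫ t in Set.Ioi (0:ℝ), KK (Real.log t) (y, a, b * cf a)).re =
      ∫ t in Set.Ioi (0:ℝ), (KK (Real.log t) (y, a, b * cf a)).re :=
    (integral_re (𝕜 := ℂ) hint).symm
  rw [r1, r2]
  rw [integral_congr_ae (Eventually.of_forall e1),
    integral_comp_abs (f := fun u => Real.exp (-(u ^ a)) * Real.cos (u * y + b * Gf a u)), setIntegral_congr_fun measurableSet_Ioi e2]

theorem isOpen_S : IsOpen {p : ℝ × (Fin 4 → ℝ) | p.2 ∈ ThetaInt} := by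
  unfold ThetaInt
  simp only [Set.mem_ofPred_eq, Set.mem_Ioo]
  refine IsOpen.and (isOpen_lt (by fun_prop) (by fun_prop)) (IsOpen.and (IsOpen.and ?_ ?_) (IsOpen.and ?_ ?_)) <;>
  exact isOpen_lt (by fun_prop) (by fun_prop)

theorem fM_contDiff : ContDiffOn ℝ 2 (fun p : ℝ × (Fin 4 → ℝ) => fM p.2 p.1)
    {p : ℝ × (Fin 4 → ℝ) | p.2 ∈ ThetaInt} := by
  have h1 : ContDiffOn ℝ 2 (fun p : ℝ × (Fin 4 → ℝ) =>
      ((p.1 - p.2 0) / p.2 1, p.2 2, p.2 3 * cf (p.2 2))) {p : ℝ × (Fin 4 → ℝ) | p.2 ∈ ThetaInt} := by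
    refine ContDiffOn.prodMk (ContDiffOn.div (by fun_prop) (by fun_prop) ?_)
      (ContDiffOn.prodMk (by fun_prop) (ContDiffOn.mul (by fun_prop) ?_))
    · intro p hp; exact hp.1.ne'
    · exact cf_contDiff.comp (by fun_prop) (fun p hp => hp.2.1)
  have h2 := hfun_contDiff.comp h1 (fun p hp => hp.2.1)
  have h3 := Complex.reCLM.contDiff.comp_contDiffOn h2
  have h4 : ContDiffOn ℝ 2 (fun p : ℝ × (Fin 4 → ℝ) => (1 / (2 * Real.pi)) * ((p.2 1)⁻¹ *
      (2 * (Complex.reCLM (hfun ((p.1 - p.2 0) / p.2 1, p.2 2, p.2 3 * cf (p.2 2)))))))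
      {p : ℝ × (Fin 4 → ℝ) | p.2 ∈ ThetaInt} := by
    refine contDiffOn_const.mul (ContDiffOn.mul (ContDiffOn.inv (by fun_prop) ?_) (contDiffOn_const.mul h3))
    intro p hp; exact hp.1.ne'
  refine h4.congr fun p hp => ?_
  rw [fM_eq hp, Fh_eq hp.2.1.1 hp.2.1.2]
  rfl

section final
variable (F : ℝ × (Fin 4 → ℝ) → ℝ)

theorem hasDeriv_param {G : ℝ × (Fin 4 → ℝ) → ℝ} {x : ℝ} {θ : Fin 4 → ℝ} (j : Fin 4)
    (h : DifferentiableAt ℝ G (x, θ)) :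
    HasDerivAt (fun s => G (x, Function.update θ j s)) (fderiv ℝ G (x, θ) (0, Pi.single j 1)) (θ j) := by
  have h1 : HasDerivAt (fun s : ℝ => (x, Function.update θ j s)) ((0 : ℝ), (Pi.single j (1:ℝ) : Fin 4 → ℝ)) (θ j) :=
    (hasDerivAt_const _ _).prodMk (hasDerivAt_update θ j (θ j))
  have h2 : HasFDerivAt G (fderiv ℝ G (x, θ)) (x, Function.update θ j (θ j)) := by
    rw [Function.update_eq_self]; exact h.hasFDerivAt
  exact h2.comp_hasDerivAt (θ j) h1

theorem hasDeriv_x {G : ℝ × (Fin 4 → ℝ) → ℝ} {x : ℝ} {θ : Fin 4 → ℝ}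
    (h : DifferentiableAt ℝ G (x, θ)) :
    HasDerivAt (fun y => G (y, θ)) (fderiv ℝ G (x, θ) (1, 0)) x := by
  have h1 : HasDerivAt (fun s : ℝ => (s, θ)) ((1 : ℝ), (0 : Fin 4 → ℝ)) x :=
    (hasDerivAt_id x).prodMk (hasDerivAt_const _ _)
  exact h.hasFDerivAt.comp_hasDerivAt x h1
end final

theorem main_of_pos (hpos : ∀ θ ∈ ThetaInt, ∀ x : ℝ, fM θ x ≠ 0) :
    (∀ θ ∈ ThetaInt, ∀ x : ℝ, fM θ x ≠ 0) ∧
    (∀ θ ∈ ThetaInt, ∀ x : ℝ, ∀ i : Fin 4,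
      DifferentiableAt ℝ (fun y => ellP i θ y) x) ∧
    (∀ θ ∈ ThetaInt, ∀ x : ℝ, ∀ i j : Fin 4,
      DifferentiableAt ℝ (fun s => ellP i (Function.update θ j s) x) (θ j)) ∧
    (∀ i : Fin 4, ContinuousOn (fun p : ℝ × (Fin 4 → ℝ) => ellP i p.2 p.1)
      {p : ℝ × (Fin 4 → ℝ) | p.2 ∈ ThetaInt}) ∧
    (∀ i : Fin 4, ContinuousOn (fun p : ℝ × (Fin 4 → ℝ) => ellPX i p.2 p.1)
      {p : ℝ × (Fin 4 → ℝ) | p.2 ∈ ThetaInt}) ∧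
    (∀ i j : Fin 4, ContinuousOn (fun p : ℝ × (Fin 4 → ℝ) => ellPP i j p.2 p.1)
      {p : ℝ × (Fin 4 → ℝ) | p.2 ∈ ThetaInt}) := by
  have hF := fM_contDiff
  set S := {p : ℝ × (Fin 4 → ℝ) | p.2 ∈ ThetaInt} with hS
  have hSo : IsOpen S := isOpen_S
  have hP : ∀ i : Fin 4, ContDiffOn ℝ 1 (fun p : ℝ × (Fin 4 → ℝ) => fP i p.2 p.1) S := by
    intro i
    have h1 : ContDiffOn ℝ 1 (fderiv ℝ (fun p : ℝ × (Fin 4 → ℝ) => fM p.2 p.1)) S :=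
      hF.fderiv_of_isOpen hSo (by norm_num)
    refine (h1.clm_apply (contDiffOn_const (c := ((0:ℝ), (Pi.single i (1:ℝ) : Fin 4 → ℝ))))).congr ?_
    rintro ⟨x, θ⟩ hp
    exact (hasDeriv_param i (((hF.differentiableOn (by norm_num)) _ hp).differentiableAt (hSo.mem_nhds hp))).deriv
  have hL : ∀ i : Fin 4, ContDiffOn ℝ 1 (fun p : ℝ × (Fin 4 → ℝ) => ellP i p.2 p.1) S := by
    intro i
    exact (hP i).div (hF.of_le (by norm_num)) (fun p hp => hpos _ hp _)
  have hD : ∀ i, ∀ p ∈ S, DifferentiableAt ℝ (fun p : ℝ × (Fin 4 → ℝ) => ellP i p.2 p.1) p :=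
    fun i p hp => (((hL i).differentiableOn (by norm_num)) _ hp).differentiableAt (hSo.mem_nhds hp)
  have hC : ∀ i, ContinuousOn (fderiv ℝ (fun p : ℝ × (Fin 4 → ℝ) => ellP i p.2 p.1)) S :=
    fun i => (hL i).continuousOn_fderiv_of_isOpen hSo (by norm_num)
  refine ⟨hpos, ?_, ?_, ?_, ?_, ?_⟩
  · intro θ hθ x i
    exact (hasDeriv_x (hD i (x, θ) hθ)).differentiableAt
  · intro θ hθ x i j
    exact (hasDeriv_param j (hD i (x, θ) hθ)).differentiableAt
  · exact fun i => (hL i).continuousOn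
  · intro i
    refine ((hC i).clm_apply (continuousOn_const (c := ((1:ℝ), (0 : Fin 4 → ℝ))))).congr ?_
    rintro ⟨x, θ⟩ hp
    exact (hasDeriv_x (hD i (x, θ) hp)).deriv
  · intro i j
    refine ((hC i).clm_apply (continuousOn_const (c := ((0:ℝ), (Pi.single j (1:ℝ) : Fin 4 → ℝ))))).congr ?_
    rintro ⟨x, θ⟩ hp
    exact (hasDeriv_param j (hD i (x, θ) hp)).deriv

noncomputable section

def JJ (q : ℝ) : ℝ := Real.pi / (2 * Real.sin (Real.pi * q / 2))

lemma JJ_pos {q : ℝ} (h0 : 0 < q) (h2 : q < 2) : 0 < JJ q := by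
  unfold JJ
  have hp := Real.pi_pos
  have : 0 < Real.sin (Real.pi * q / 2) := by
    apply Real.sin_pos_of_pos_of_lt_pi
    · positivity
    · nlinarith
  positivity

lemma lint_J {q : ℝ} (h0 : 0 < q) (h2 : q < 2) :
    ∫⁻ r in Set.Ioi (0:ℝ), ENNReal.ofReal (r ^ (q-1) / (r^2+1)) = ENNReal.ofReal (JJ q) := by
  have e1 : ∀ r : ℝ, 0 < r → ENNReal.ofReal (r ^ (q-1) / (r^2+1)) =
      ∫⁻ v in Set.Ioi (0:ℝ), ENNReal.ofReal (r^(q-1) * Real.exp (-(r^2+1) * v)) := by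
    intro r hr
    have hneg : -(r^2+1) < 0 := by nlinarith [sq_nonneg r]
    rw [← ofReal_integral_eq_lintegral_ofReal]
    · rw [integral_const_mul, integral_exp_mul_Ioi hneg]
      congr 1
      rw [mul_zero, Real.exp_zero, neg_div_neg_eq]
      ring
    · exact (integrableOn_exp_mul_Ioi hneg 0).const_mul _
    · exact ae_of_all _ fun v => mul_nonneg (Real.rpow_nonneg hr.le _) (Real.exp_pos _).le
  rw [setLIntegral_congr_fun measurableSet_Ioi (fun r hr => e1 r hr)]
  rw [lintegral_lintegral_swap (by apply Measurable.aemeasurable; unfold Function.uncurry; fun_prop)]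
  have e2 : ∀ v : ℝ, 0 < v → ∫⁻ r in Set.Ioi (0:ℝ), ENNReal.ofReal (r^(q-1) * Real.exp (-(r^2+1) * v))
      = ENNReal.ofReal (Real.exp (-v) * v ^ ((1 - q/2) - 1) * (1/2 * Real.Gamma (q/2))) := by
    intro v hv
    have e3 : (fun r : ℝ => r^(q-1) * Real.exp (-(r^2+1) * v)) =
        fun r => Real.exp (-v) * (r^(q-1) * Real.exp (-v * r^(2:ℝ))) := by
      ext r
      rw [show -(r^2+1)*v = -v + -v * r^(2:ℝ) by
        rw [Real.rpow_two]; ring, Real.exp_add]; ring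
    rw [← ofReal_integral_eq_lintegral_ofReal]
    · rw [e3, integral_const_mul, integral_rpow_mul_exp_neg_mul_rpow (by norm_num) (by linarith) hv]
      congr 1
      rw [show -(q - 1 + 1)/2 = 1 - q/2 - 1 by ring, show (q-1+1)/2 = q/2 by ring]
      ring
    · rw [e3]
      exact (integrableOn_rpow_mul_exp_neg_mul_rpow (by linarith) (by norm_num) hv).const_mul _
    · filter_upwards [ae_restrict_mem measurableSet_Ioi] with r hr
      exact mul_nonneg (Real.rpow_nonneg (le_of_lt hr) _) (Real.exp_pos _).le
  rw [setLIntegral_congr_fun measurableSet_Ioi (fun v hv => e2 v hv)]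
  rw [← ofReal_integral_eq_lintegral_ofReal]
  · rw [integral_mul_const, ← Real.Gamma_eq_integral (by linarith)]
    have := Real.Gamma_mul_Gamma_one_sub (q/2)
    congr 1
    unfold JJ
    rw [show Real.Gamma (1 - q/2) * (1/2 * Real.Gamma (q/2)) = 1/2 * (Real.Gamma (q/2) * Real.Gamma (1 - q/2)) by ring, this,
      show Real.pi * (q/2) = Real.pi * q/2 by ring]
    rw [div_mul_div_comm, one_mul]
  · exact (Real.GammaIntegral_convergent (by linarith)).mul_const _
  · filter_upwards [ae_restrict_mem measurableSet_Ioi] with r hr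
    have := Real.Gamma_pos_of_pos (show 0 < q/2 by linarith)
    have h3 := Real.rpow_nonneg (le_of_lt hr) (1 - q/2 - 1)
    show (0:ℝ) ≤ _
    positivity

lemma J_int {q : ℝ} (h0 : 0 < q) (h2 : q < 2) :
    IntegrableOn (fun r : ℝ => r ^ (q-1) / (r^2+1)) (Set.Ioi 0) := by
  refine ⟨by apply Measurable.aestronglyMeasurable; fun_prop, ?_⟩
  rw [hasFiniteIntegral_iff_ofReal, lint_J h0 h2]
  · simp
  · filter_upwards [ae_restrict_mem measurableSet_Ioi] with r hr
    have h3 := Real.rpow_nonneg (le_of_lt hr) (q - 1)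
    show (0:ℝ) ≤ _
    positivity

lemma J_val {q : ℝ} (h0 : 0 < q) (h2 : q < 2) :
    ∫ r in Set.Ioi (0:ℝ), r ^ (q-1) / (r^2+1) = JJ q := by
  rw [integral_eq_lintegral_of_nonneg_ae, lint_J h0 h2, ENNReal.toReal_ofReal (JJ_pos h0 h2).le]
  · filter_upwards [ae_restrict_mem measurableSet_Ioi] with r hr
    have h3 := Real.rpow_nonneg (le_of_lt hr) (q - 1)
    show (0:ℝ) ≤ _
    positivity
  · apply Measurable.aestronglyMeasurable; fun_prop

lemma J_scale_aux {q u : ℝ} (hu : 0 < u) : Set.EqOn (fun r : ℝ => r^(q-1)/(r^2+u^2))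
    (fun r => u^(q-3) * ((fun s : ℝ => s^(q-1)/(s^2+1)) (u⁻¹ * r))) (Set.Ioi 0) := by
  intro r hr
  have hr' : 0 < r := hr
  simp only
  rw [Real.mul_rpow (by positivity) hr'.le, Real.inv_rpow hu.le,
    show q - 3 = (q-1) - 2 by ring, Real.rpow_sub hu, Real.rpow_two]
  have := Real.rpow_pos_of_pos hu (q-1)
  field_simp

lemma Ju_int {q u : ℝ} (h0 : 0 < q) (h2 : q < 2) (hu : 0 < u) :
    IntegrableOn (fun r : ℝ => r ^ (q-1) / (r^2+u^2)) (Set.Ioi 0) := by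
  rw [integrableOn_congr_fun (J_scale_aux hu) measurableSet_Ioi]
  apply Integrable.const_mul
  have := (integrableOn_Ioi_comp_mul_left_iff (fun s : ℝ => s^(q-1)/(s^2+1)) 0 (inv_pos.2 hu)).2
    (by simpa using J_int h0 h2)
  exact this

lemma Ju_val {q u : ℝ} (h0 : 0 < q) (h2 : q < 2) (hu : 0 < u) :
    ∫ r in Set.Ioi (0:ℝ), r ^ (q-1) / (r^2+u^2) = u^(q-2) * JJ q := by
  rw [setIntegral_congr_fun measurableSet_Ioi (J_scale_aux hu), integral_const_mul,
    integral_comp_mul_left_Ioi (fun s : ℝ => s^(q-1)/(s^2+1)) 0 (inv_pos.2 hu), mul_zero, J_val h0 h2]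
  rw [show q - 2 = (q-3)+1 by ring, Real.rpow_add_one hu.ne']
  simp; ring

end

noncomputable section

def LI (a u r : ℝ) : ℝ := r^(a-1)*(r*u/(r^2+u^2) - r*u/(r^2+1))

lemma LI_lt {a u : ℝ} (ha : 0 < a) (ha1 : a < 1) (hu : 0 < u) :
    IntegrableOn (LI a u) (Set.Ioi 0) ∧ ∫ r in Set.Ioi (0:ℝ), LI a u r = -(JJ a * Gf a u) := by
  have e : Set.EqOn (LI a u) (fun r => u * (r^((a+1)-1)/(r^2+u^2)) - u * (r^((a+1)-1)/(r^2+1)))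
      (Set.Ioi 0) := by
    intro r hr
    have hr' : 0 < r := hr
    simp only [LI]
    rw [show a + 1 - 1 = a - 1 + 1 by ring, Real.rpow_add_one hr'.ne']
    ring
  have i1 := (Ju_int (q := a+1) (by linarith) (by linarith) hu).const_mul u
  have i2 := (J_int (q := a+1) (by linarith) (by linarith)).const_mul u
  refine ⟨(integrableOn_congr_fun e measurableSet_Ioi).2 (i1.sub i2), ?_⟩
  rw [setIntegral_congr_fun measurableSet_Ioi e, integral_sub i1 i2, integral_const_mul,
    integral_const_mul, J_val (by linarith) (by linarith), Ju_val (by linarith) (by linarith) hu]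
  unfold JJ Gf
  rw [if_neg ha1.ne, show Real.pi * (a+1)/2 = Real.pi * a/2 + Real.pi/2 by ring,
    Real.sin_add_pi_div_two, Real.tan_eq_sin_div_cos, show a + 1 - 2 = a - 1 by ring,
    Real.rpow_sub_one hu.ne']
  have hp := Real.pi_pos
  have h1 : Real.sin (Real.pi * a/2) ≠ 0 := by
    apply (Real.sin_pos_of_pos_of_lt_pi (by positivity) (by nlinarith)).ne'
  have h2 : Real.cos (Real.pi * a/2) ≠ 0 := by
    apply (Real.cos_pos_of_mem_Ioo ⟨by nlinarith, by nlinarith⟩).ne'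
  field_simp
  ring

lemma LI_gt {a u : ℝ} (ha : 1 < a) (ha1 : a < 2) (hu : 0 < u) :
    IntegrableOn (LI a u) (Set.Ioi 0) ∧ ∫ r in Set.Ioi (0:ℝ), LI a u r = -(JJ a * Gf a u) := by
  have e : Set.EqOn (LI a u) (fun r => u * (r^((a-1)-1)/(r^2+1)) - u^3 * (r^((a-1)-1)/(r^2+u^2)))
      (Set.Ioi 0) := by
    intro r hr
    have hr' : 0 < r := hr
    simp only [LI]
    rw [Real.rpow_sub_one hr'.ne' (a-1)]
    field_simp
    ring
  have i1 := (Ju_int (q := a-1) (by linarith) (by linarith) hu).const_mul (u^3)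
  have i2 := (J_int (q := a-1) (by linarith) (by linarith)).const_mul u
  refine ⟨(integrableOn_congr_fun e measurableSet_Ioi).2 (i2.sub i1), ?_⟩
  rw [setIntegral_congr_fun measurableSet_Ioi e, integral_sub i2 i1, integral_const_mul,
    integral_const_mul, J_val (by linarith) (by linarith), Ju_val (by linarith) (by linarith) hu]
  unfold JJ Gf
  rw [if_neg ha.ne', show Real.pi * (a-1)/2 = Real.pi * a/2 - Real.pi/2 by ring,
    Real.sin_sub_pi_div_two, Real.tan_eq_sin_div_cos, show a - 1 - 2 = a - (3:ℕ) by push_cast; ring,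
    Real.rpow_sub_natCast hu.ne']
  have hp := Real.pi_pos
  have h1 : Real.sin (Real.pi * a/2) ≠ 0 := by
    apply (Real.sin_pos_of_pos_of_lt_pi (by positivity) (by nlinarith)).ne'
  have h2 : Real.cos (Real.pi * a/2) ≠ 0 := by
    apply (Real.cos_neg_of_pi_div_two_lt_of_lt (by nlinarith) (by nlinarith)).ne
  field_simp
  ring

lemma LI_eq {u : ℝ} (hu : 0 < u) :
    IntegrableOn (LI 1 u) (Set.Ioi 0) ∧ ∫ r in Set.Ioi (0:ℝ), LI 1 u r = -(JJ 1 * Gf 1 u) := by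
  have hint : IntegrableOn (LI 1 u) (Set.Ioi 0) := by
    have i0 := (J_int (q := 1) (by norm_num) (by norm_num)).const_mul (|1-u^2|)
    refine Integrable.mono' i0 (by apply Measurable.aestronglyMeasurable; unfold LI; fun_prop) ?_
    filter_upwards [ae_restrict_mem measurableSet_Ioi] with r hr
    have hr' : 0 < r := hr
    have e : LI 1 u r = (1-u^2) * (r*u/(r^2+u^2) * (1/(r^2+1))) := by
      simp only [LI, sub_self, Real.rpow_zero]
      field_simp
      ring
    rw [e, Real.norm_eq_abs, abs_mul, sub_self, Real.rpow_zero]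
    gcongr
    rw [abs_of_nonneg (by positivity)]
    have : r*u/(r^2+u^2) ≤ 1 := by
      rw [div_le_one (by positivity)]
      nlinarith [sq_nonneg (r-u)]
    calc _ ≤ 1 * (1/(r^2+1)) := by gcongr
      _ = _ := one_mul _
  refine ⟨hint, ?_⟩
  set F : ℝ → ℝ := fun r => u * (1/2 * (Real.log ((r^2+u^2)/(r^2+1)))) with hF
  have hd : ∀ r : ℝ, HasDerivAt F (LI 1 u r) r := by
    intro r
    have h1 : HasDerivAt (fun r : ℝ => r^2+u^2) (2*r) r := by
      simpa using (hasDerivAt_pow 2 r).add_const (u^2)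
    have h2 : HasDerivAt (fun r : ℝ => r^2+1) (2*r) r := by
      simpa using (hasDerivAt_pow 2 r).add_const 1
    have h0 : (r^2+u^2)/(r^2+1) ≠ 0 := by positivity
    have h3 := (((h1.fun_div h2 (by positivity)).log h0).const_mul (1/2)).const_mul u
    refine h3.congr_deriv ?_
    simp only [LI, sub_self, Real.rpow_zero]
    field_simp
  have ht : Tendsto F atTop (𝓝 0) := by
    have h1 : Tendsto (fun r : ℝ => (r^2+u^2)/(r^2+1)) atTop (𝓝 1) := by
      have : (fun r : ℝ => (r^2+u^2)/(r^2+1)) = fun r => 1 + (u^2-1) * (r^2+1)⁻¹ := by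
        ext r; field_simp; ring
      rw [this]
      have h4 : Tendsto (fun r : ℝ => r^2+1) atTop atTop :=
        tendsto_atTop_add_const_right _ _ (tendsto_pow_atTop (by norm_num))
      simpa using (h4.inv_tendsto_atTop.const_mul (u^2-1)).const_add 1
    have h2 := ((Real.continuousAt_log (one_ne_zero)).tendsto.comp h1)
    have h5 := (h2.const_mul (1/2)).const_mul u
    rw [Real.log_one, mul_zero, mul_zero] at h5
    exact h5
  rw [integral_Ioi_of_hasDerivAt_of_tendsto (hd 0).continuousAt.continuousWithinAt (fun r _ => hd r) hint ht]
  simp only [hF, JJ, Gf, if_pos]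
  rw [mul_one, Real.sin_pi_div_two]
  have := Real.pi_pos
  simp
  field_simp

lemma LI_all {a u : ℝ} (ha : 0 < a) (ha2 : a < 2) (hu : 0 < u) :
    IntegrableOn (LI a u) (Set.Ioi 0) ∧ ∫ r in Set.Ioi (0:ℝ), LI a u r = -(JJ a * Gf a u) := by
  rcases lt_trichotomy a 1 with h | h | h
  · exact LI_lt ha h hu
  · subst h; exact LI_eq hu
  · exact LI_gt h ha2 hu

lemma LI_neg (a u r : ℝ) : LI a (-u) r = - LI a u r := by
  unfold LI; rw [neg_sq]; ring

lemma LI_sign {a : ℝ} (ha : 0 < a) (ha2 : a < 2) (t : ℝ) :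
    IntegrableOn (LI a t) (Set.Ioi 0) ∧
      ∫ r in Set.Ioi (0:ℝ), LI a t r = -(JJ a * (Real.sign t * Gf a |t|)) := by
  rcases lt_trichotomy t 0 with h | h | h
  · have := LI_all ha ha2 (neg_pos.2 h)
    rw [Real.sign_of_neg h, abs_of_neg h]
    have e : LI a t = fun r => - LI a (-t) r := by ext r; rw [LI_neg, neg_neg]
    rw [e]
    refine ⟨this.1.neg, ?_⟩
    rw [integral_neg, this.2]; ring
  · subst h
    have e : LI a 0 = fun r => 0 := by ext r; simp [LI]
    rw [e]; simp
  · have := LI_all ha ha2 h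
    rw [Real.sign_of_pos h, abs_of_pos h, one_mul]
    exact this

def RI (a t r : ℝ) : ℝ := r^(a-1)*(t^2/(r^2+t^2))

lemma RI_all {a : ℝ} (ha : 0 < a) (ha2 : a < 2) (t : ℝ) :
    IntegrableOn (RI a t) (Set.Ioi 0) ∧
      ∫ r in Set.Ioi (0:ℝ), RI a t r = JJ a * |t|^a := by
  by_cases h : t = 0
  · subst h
    have e : RI a 0 = fun r => 0 := by ext r; simp [RI]
    rw [e]; simp [Real.zero_rpow ha.ne']
  · have h' : 0 < |t| := abs_pos.2 h
    have e : RI a t = fun r => |t|^2 * (r^(a-1)/(r^2+|t|^2)) := by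
      ext r; simp only [RI, sq_abs]; ring
    rw [e]
    refine ⟨(Ju_int ha ha2 h').const_mul _, ?_⟩
    rw [integral_const_mul, Ju_val ha ha2 h', show a - 2 = a - (2:ℕ) by norm_num,
      Real.rpow_sub_natCast h'.ne']
    field_simp

def Lam (a b t r : ℝ) : ℂ :=
  ((-(1/JJ a) * RI a t r : ℝ) : ℂ) + Complex.I * ((b/JJ a * LI a t r : ℝ) : ℂ)

lemma Lam_integrable {a : ℝ} (ha : 0 < a) (ha2 : a < 2) (b t : ℝ) :
    IntegrableOn (Lam a b t) (Set.Ioi 0) := by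
  apply Integrable.add
  · exact ((RI_all ha ha2 t).1.const_mul _).ofReal
  · exact (((LI_sign ha ha2 t).1.const_mul _).ofReal).const_mul _

lemma psi0_eq_Lam {a : ℝ} (ha : 0 < a) (ha2 : a < 2) (b t : ℝ) :
    psi0 a b t = ∫ r in Set.Ioi (0:ℝ), Lam a b t r := by
  unfold Lam
  rw [integral_add, integral_const_mul]
  · have hJ := (JJ_pos ha ha2).ne'
    rw [integral_complex_ofReal, integral_complex_ofReal, integral_const_mul, integral_const_mul,
      (RI_all ha ha2 t).2, (LI_sign ha ha2 t).2, psi0]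
    rw [show -(1/JJ a) * (JJ a * |t|^a) = -(|t|^a) by field_simp,
      show b / JJ a * -(JJ a * (Real.sign t * Gf a |t|)) = - (b * Real.sign t * Gf a |t|) by field_simp]
    push_cast
    ring
  · exact ((RI_all ha ha2 t).1.const_mul _).ofReal
  · exact (((LI_sign ha ha2 t).1.const_mul _).ofReal).const_mul _

end

noncomputable section

def cp (a b : ℝ) : ℝ := (1+b)/(2*JJ a)
def cm (a b : ℝ) : ℝ := (1-b)/(2*JJ a)

def wd (a b : ℝ) (p : ℝ × ℝ) : ℝ :=
  p.1^a * Real.exp (-(p.1*|p.2|)) * (if 0 < p.2 then cp a b else cm a b)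

lemma wd_meas (a b : ℝ) : Measurable (wd a b) := by
  unfold wd
  apply Measurable.mul
  · fun_prop
  · exact Measurable.ite (measurableSet_lt measurable_const measurable_snd) measurable_const measurable_const

lemma cp_pos {a b : ℝ} (ha : 0 < a) (ha2 : a < 2) (hb : -1 < b) : 0 < cp a b := by
  have := JJ_pos ha ha2
  unfold cp
  have : 0 < 1 + b := by linarith
  positivity

lemma cm_pos {a b : ℝ} (ha : 0 < a) (ha2 : a < 2) (hb : b < 1) : 0 < cm a b := by
  have := JJ_pos ha ha2
  unfold cm
  have : 0 < 1 - b := by linarith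
  positivity

lemma wd_pos {a b : ℝ} (ha : 0 < a) (ha2 : a < 2) (hb : -1 < b) (hb1 : b < 1) {r : ℝ} (hr : 0 < r)
    (y : ℝ) : 0 < wd a b (r, y) := by
  have h1 := cp_pos ha ha2 hb
  have h2 := cm_pos ha ha2 hb1
  unfold wd
  have := Real.rpow_pos_of_pos hr a
  simp only
  split_ifs <;> positivity

def KF (a b t r : ℝ) : ℂ :=
  ((r^(a-1) * ((1/JJ a) * (r^2/(r^2+t^2))) : ℝ) : ℂ)
    + Complex.I * ((r^(a-1) * (b/JJ a * (r*t/(r^2+t^2))) : ℝ) : ℂ)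

lemma wd_inner (a b t : ℝ) {r : ℝ} (hJ : JJ a ≠ 0) (hr : 0 < r) :
    Integrable (fun y : ℝ => (wd a b (r,y) : ℂ) * Complex.exp (t * y * Complex.I)) ∧
    ∫ y : ℝ, (wd a b (r,y) : ℂ) * Complex.exp (t * y * Complex.I) = KF a b t r := by
  have hre1 : (-(r:ℂ) + t * Complex.I).re < 0 := by simp [hr]
  have hre2 : 0 < ((r:ℂ) + t * Complex.I).re := by simp [hr]
  have e1 : Set.EqOn (fun y : ℝ => (wd a b (r,y) : ℂ) * Complex.exp (t * y * Complex.I))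
      (fun y => ((r^a * cp a b : ℝ) : ℂ) * Complex.exp ((-(r:ℂ) + t * Complex.I) * y)) (Set.Ioi 0) := by
    intro y hy
    have hy' : 0 < y := hy
    simp only [wd]
    rw [if_pos hy', abs_of_pos hy', add_mul, Complex.exp_add]
    push_cast
    rw [show (t:ℂ) * y * Complex.I = t * Complex.I * y by ring,
      show -((r:ℂ) * y) = -(r:ℂ) * y by ring]
    ring
  have e2 : Set.EqOn (fun y : ℝ => (wd a b (r,y) : ℂ) * Complex.exp (t * y * Complex.I))
      (fun y => ((r^a * cm a b : ℝ) : ℂ) * Complex.exp (((r:ℂ) + t * Complex.I) * y)) (Set.Iic 0) := by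
    intro y hy
    have hy' : y ≤ 0 := hy
    simp only [wd]
    rw [if_neg (not_lt.2 hy'), abs_of_nonpos hy', add_mul, Complex.exp_add]
    push_cast
    rw [show (t:ℂ) * y * Complex.I = t * Complex.I * y by ring,
      show -((r:ℂ) * (-y)) = (r:ℂ) * y by ring]
    ring
  have i1 : IntegrableOn (fun y : ℝ => (wd a b (r,y) : ℂ) * Complex.exp (t * y * Complex.I)) (Set.Ioi 0) :=
    (integrableOn_congr_fun e1 measurableSet_Ioi).2 ((integrableOn_exp_mul_complex_Ioi hre1 0).const_mul _)
  have i2 : IntegrableOn (fun y : ℝ => (wd a b (r,y) : ℂ) * Complex.exp (t * y * Complex.I)) (Set.Iic 0) :=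
    (integrableOn_congr_fun e2 measurableSet_Iic).2 ((integrableOn_exp_mul_complex_Iic hre2 0).const_mul _)
  refine ⟨?_, ?_⟩
  · rw [← integrableOn_univ, ← Set.Iic_union_Ioi (a := (0:ℝ))]
    exact i2.union i1
  · rw [← intervalIntegral.integral_Iic_add_Ioi i2 i1, setIntegral_congr_fun measurableSet_Iic e2,
      setIntegral_congr_fun measurableSet_Ioi e1, integral_const_mul, integral_const_mul,
      integral_exp_mul_complex_Ioi hre1, integral_exp_mul_complex_Iic hre2]
    have hn1 : (-(r:ℂ) + t * Complex.I) ≠ 0 := by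
      intro h; rw [h] at hre1; simp at hre1
    have hn2 : ((r:ℂ) + t * Complex.I) ≠ 0 := by
      intro h; rw [h] at hre2; simp at hre2
    have hn3 : ((r:ℂ)^2 + t^2) ≠ 0 := by
      have : r^2+t^2 ≠ 0 := by positivity
      exact_mod_cast this
    have hJc : (JJ a : ℂ) ≠ 0 := by exact_mod_cast hJ
    have q1 : (1:ℂ)/((r:ℂ) + t * Complex.I) = (r - t*Complex.I)/(r^2+t^2) := by
      rw [div_eq_div_iff hn2 hn3]; ring_nf; simp
    have q2 : -(1:ℂ)/(-(r:ℂ) + t * Complex.I) = (r + t*Complex.I)/(r^2+t^2) := by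
      rw [div_eq_div_iff hn1 hn3]; ring_nf; simp; ring
    have hra : ((r^a : ℝ) : ℂ) = ((r^(a-1) : ℝ) : ℂ) * r := by
      rw [← Complex.ofReal_mul, ← Real.rpow_add_one hr.ne']; simp
    simp only [Complex.ofReal_zero, mul_zero, Complex.exp_zero]
    rw [q1, q2]
    simp only [KF, cp, cm]
    push_cast
    rw [hra]
    field_simp
    ring

lemma wd_inner0 (a b : ℝ) {r : ℝ} (hJ : JJ a ≠ 0) (hr : 0 < r) :
    Integrable (fun y : ℝ => wd a b (r,y)) ∧ ∫ y : ℝ, wd a b (r,y) = r^(a-1) * (1/JJ a) := by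
  have h := wd_inner a b 0 hJ hr
  simp only [Complex.ofReal_zero, zero_mul, Complex.exp_zero, mul_one] at h
  have h1 := h.1.re
  simp only [RCLike.re_to_complex, Complex.ofReal_re] at h1
  refine ⟨h1, ?_⟩
  have h2 := h.2
  rw [integral_complex_ofReal] at h2
  have h3 := congrArg Complex.re h2
  simp only [Complex.ofReal_re, KF] at h3
  rw [h3, Complex.add_re, Complex.ofReal_re, Complex.mul_re, Complex.ofReal_im, Complex.I_re]
  have hr2 : r^2 ≠ 0 := by positivity
  rw [zero_pow two_ne_zero, add_zero, div_self hr2]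
  ring

lemma wd_int {a b : ℝ} (ha : 0 < a) (ha2 : a < 2) (hb : -1 < b) (hb1 : b < 1) {A : ℝ} (hA : 0 ≤ A)
    (B : ℝ) : Integrable (wd a b) ((volume.restrict (Set.Ioc A B)).prod volume) := by
  have hJ := (JJ_pos ha ha2).ne'
  rw [integrable_prod_iff (wd_meas a b).aestronglyMeasurable]
  constructor
  · filter_upwards [ae_restrict_mem measurableSet_Ioc] with r hr
    exact (wd_inner0 a b hJ (lt_of_le_of_lt hA hr.1)).1
  · have e : Set.EqOn (fun r => ∫ y, ‖wd a b (r,y)‖) (fun r => r^(a-1) * (1/JJ a)) (Set.Ioc A B) := by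
      intro r hr
      have hr0 := lt_of_le_of_lt hA hr.1
      simp only
      rw [← (wd_inner0 a b hJ hr0).2]
      congr 1
      ext y
      exact Real.norm_of_nonneg (wd_pos ha ha2 hb hb1 hr0 y).le
    rw [← IntegrableOn, integrableOn_congr_fun e measurableSet_Ioc]
    apply Integrable.mul_const
    exact (intervalIntegral.intervalIntegrable_rpow' (a := A) (b := B) (by linarith)).1

def nu (a b A B : ℝ) : Measure ℝ :=
  (((volume.restrict (Set.Ioc A B)).prod volume).withDensity
    (fun p => ENNReal.ofReal (wd a b p))).map Prod.snd

lemma nu_finite {a b : ℝ} (ha : 0 < a) (ha2 : a < 2) (hb : -1 < b) (hb1 : b < 1) {A : ℝ} (hA : 0 ≤ A)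
    (B : ℝ) : IsFiniteMeasure (nu a b A B) := by
  have := isFiniteMeasure_withDensity_ofReal (wd_int ha ha2 hb hb1 hA B).2
  unfold nu
  infer_instance

lemma nu_char {a b : ℝ} (ha : 0 < a) (ha2 : a < 2) (hb : -1 < b) (hb1 : b < 1) {A : ℝ} (hA : 0 ≤ A)
    (B t : ℝ) : IntegrableOn (KF a b t) (Set.Ioc A B) ∧
    charFun (nu a b A B) t = ∫ r in Set.Ioc A B, KF a b t r := by
  have hJ := (JJ_pos ha ha2).ne'
  have hI : Integrable (fun p : ℝ × ℝ => (wd a b p : ℂ) * Complex.exp (t * p.2 * Complex.I))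
      ((volume.restrict (Set.Ioc A B)).prod volume) := by
    refine (wd_int ha ha2 hb hb1 hA B).norm.mono' ?_ ?_
    · apply Measurable.aestronglyMeasurable
      have := wd_meas a b
      fun_prop
    · refine ae_of_all _ fun p => ?_
      rw [norm_mul, show (t:ℂ) * p.2 * Complex.I = ((t*p.2 : ℝ) : ℂ) * Complex.I by push_cast; ring,
        Complex.norm_exp_ofReal_mul_I, mul_one, Complex.norm_real]
  have e : Set.EqOn (fun r => ∫ y : ℝ, (wd a b (r,y) : ℂ) * Complex.exp (t * y * Complex.I)) (KF a b t)
      (Set.Ioc A B) := fun r hr => (wd_inner a b t hJ (lt_of_le_of_lt hA hr.1)).2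
  constructor
  · have := hI.integral_prod_left
    exact (integrableOn_congr_fun e measurableSet_Ioc).1 this
  · rw [charFun_apply_real, nu, integral_map measurable_snd.aemeasurable
      (by apply Measurable.aestronglyMeasurable; fun_prop),
      integral_withDensity_eq_integral_toReal_smul (wd_meas a b).ennreal_ofReal
        (ae_of_all _ fun _ => ENNReal.ofReal_lt_top)]
    rw [← setIntegral_congr_fun measurableSet_Ioc e, ← integral_prod _ hI]
    apply integral_congr_ae
    have : ∀ᵐ p ∂((volume.restrict (Set.Ioc A B)).prod (volume : Measure ℝ)), p.1 ∈ Set.Ioc A B :=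
      Measure.quasiMeasurePreserving_fst.ae (ae_restrict_mem measurableSet_Ioc)
    filter_upwards [this] with p hp
    rw [ENNReal.toReal_ofReal (wd_pos ha ha2 hb hb1 (lt_of_le_of_lt hA hp.1) p.2).le,
      Complex.real_smul]

lemma nu_Lam {a b : ℝ} (ha : 0 < a) (ha2 : a < 2) (hb : -1 < b) (hb1 : b < 1) {A : ℝ} (hA : 0 ≤ A)
    (B : ℝ) : ∃ lam D : ℝ, ∀ t : ℝ,
    ∫ r in Set.Ioc A B, Lam a b t r = charFun (nu a b A B) t - lam - Complex.I * t * D := by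
  refine ⟨(nu a b A B).real Set.univ, ∫ r in Set.Ioc A B, b/JJ a * (r^a/(r^2+1)), fun t => ?_⟩
  rw [← charFun_zero]
  have h1 := nu_char ha ha2 hb hb1 hA B t
  have h0 := nu_char ha ha2 hb hb1 hA B 0
  rw [h1.2, h0.2, ← integral_sub h1.1 h0.1, ← integral_complex_ofReal, ← integral_const_mul]
  have h3 : IntegrableOn (fun r : ℝ => b/JJ a * (r^a/(r^2+1))) (Set.Ioc A B) := by
    apply Integrable.const_mul
    have : IntegrableOn (fun r : ℝ => r^a) (Set.Ioc A B) :=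
      (intervalIntegral.intervalIntegrable_rpow' (a := A) (b := B) (by linarith)).1
    refine this.mono' (by apply Measurable.aestronglyMeasurable; fun_prop) ?_
    filter_upwards [ae_restrict_mem measurableSet_Ioc] with r hr
    have hr0 := lt_of_le_of_lt hA hr.1
    have := Real.rpow_nonneg hr0.le a
    rw [Real.norm_of_nonneg (by positivity)]
    apply div_le_self this
    nlinarith
  have i1 : Integrable (fun r => KF a b t r - KF a b 0 r) (volume.restrict (Set.Ioc A B)) := h1.1.sub h0.1
  have i2 : Integrable (fun r => Complex.I * t * ((b/JJ a * (r^a/(r^2+1)) : ℝ) : ℂ))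
    (volume.restrict (Set.Ioc A B)) := h3.ofReal.const_mul _
  rw [← integral_sub i1 i2]
  apply setIntegral_congr_fun measurableSet_Ioc
  intro r hr
  have hr0 := lt_of_le_of_lt hA hr.1
  simp only [Lam, KF, RI, LI]
  have hra : r^a = r^(a-1) * r := by
    rw [← Real.rpow_add_one hr0.ne']; simp
  have hJ := (JJ_pos ha ha2).ne'
  have e1 : -(1/JJ a) * (r^(a-1) * (t^2/(r^2+t^2))) = r^(a-1) * ((1/JJ a) * (r^2/(r^2+t^2)))
      - r^(a-1) * ((1/JJ a) * (r^2/(r^2+0^2))) := by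
    field_simp
    ring
  have e2 : b/JJ a * (r^(a-1)*(r*t/(r^2+t^2) - r*t/(r^2+1))) = r^(a-1) * (b/JJ a * (r*t/(r^2+t^2)))
      - r^(a-1) * (b/JJ a * (r*0/(r^2+0^2))) - t * (b/JJ a * (r^a/(r^2+1))) := by
    rw [hra]
    field_simp
    ring
  rw [e1, e2]
  rw [Complex.ofReal_sub, Complex.ofReal_sub, Complex.ofReal_sub, Complex.ofReal_mul t]
  ring

lemma nu_open {a b : ℝ} (ha : 0 < a) (ha2 : a < 2) (hb : -1 < b) (hb1 : b < 1) {A B : ℝ} (hA : 0 ≤ A)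
    (hAB : A < B) {O : Set ℝ} (hO : IsOpen O) (hne : O.Nonempty) : 0 < nu a b A B O := by
  rw [nu, Measure.map_apply measurable_snd hO.measurableSet, pos_iff_ne_zero, Ne,
    withDensity_apply_eq_zero (wd_meas a b).ennreal_ofReal]
  intro h
  have hsub : (Set.Ioc A B) ×ˢ O ⊆ {x | ENNReal.ofReal (wd a b x) ≠ 0} ∩ Prod.snd ⁻¹' O := by
    rintro ⟨r, y⟩ ⟨hr, hy⟩
    refine ⟨?_, hy⟩
    have := wd_pos ha ha2 hb hb1 (lt_of_le_of_lt hA hr.1) y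
    show ENNReal.ofReal (wd a b (r,y)) ≠ 0
    simpa using this
  have h2 := measure_mono_null hsub h
  rw [Measure.prod_prod, Measure.restrict_apply measurableSet_Ioc, Set.inter_self, Real.volume_Ioc,
    mul_eq_zero] at h2
  rcases h2 with h2 | h2
  · simp at h2; linarith
  · exact (hO.measure_pos volume hne).ne' h2

end

noncomputable section

def Ft (ψ : ℝ → ℂ) (x : ℝ) : ℂ := ∫ t : ℝ, Complex.exp (-Complex.I * t * x) * ψ t

lemma norm_Ft_exp (t x : ℝ) : ‖Complex.exp (-Complex.I * t * x)‖ = 1 := by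
  rw [show -Complex.I * t * x = ((-(t*x) : ℝ) : ℂ) * Complex.I by push_cast; ring,
    Complex.norm_exp_ofReal_mul_I]

lemma Ft_integrable {ψ : ℝ → ℂ} (hψ : Integrable ψ) (x : ℝ) :
    Integrable (fun t : ℝ => Complex.exp (-Complex.I * t * x) * ψ t) := by
  refine hψ.norm.mono' ?_ (ae_of_all _ fun t => ?_)
  · exact (Measurable.aestronglyMeasurable (by fun_prop)).mul hψ.1
  · rw [norm_mul, norm_Ft_exp, one_mul]

lemma Ft_continuous {ψ : ℝ → ℂ} (hψ : Integrable ψ) : Continuous (Ft ψ) := by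
  unfold Ft
  refine continuous_of_dominated (bound := fun t => ‖ψ t‖) (fun x => (Ft_integrable hψ x).1)
    (fun x => ae_of_all _ fun t => ?_) hψ.norm (ae_of_all _ fun t => by fun_prop)
  rw [norm_mul, norm_Ft_exp, one_mul]

lemma Ft_norm_le {ψ : ℝ → ℂ} (x : ℝ) : ‖Ft ψ x‖ ≤ ∫ t, ‖ψ t‖ := by
  unfold Ft
  refine (norm_integral_le_integral_norm _).trans (le_of_eq ?_)
  congr 1; ext t
  rw [norm_mul, norm_Ft_exp, one_mul]

lemma Ft_shift_integrable {ψ : ℝ → ℂ} (hψ : Integrable ψ) (ν : Measure ℝ) [IsFiniteMeasure ν] (x : ℝ) :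
    Integrable (fun y => Ft ψ (x - y)) ν := by
  refine Integrable.of_bound (C := ∫ t, ‖ψ t‖) ?_ (ae_of_all _ fun y => Ft_norm_le _)
  exact ((Ft_continuous hψ).comp (continuous_const.sub continuous_id)).aestronglyMeasurable

lemma charFun_mul_integrable {ψ : ℝ → ℂ} (hψ : Integrable ψ) (ν : Measure ℝ) [IsFiniteMeasure ν] :
    Integrable (fun t => charFun ν t * ψ t) := by
  refine hψ.bdd_mul (c := ν.real Set.univ) continuous_charFun.aestronglyMeasurable (ae_of_all _ fun t => norm_charFun_le t)

lemma Ft_charFun {ψ : ℝ → ℂ} (hψ : Integrable ψ) (ν : Measure ℝ) [IsFiniteMeasure ν] (x : ℝ) :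
    Ft (fun t => charFun ν t * ψ t) x = ∫ y, Ft ψ (x - y) ∂ν := by
  unfold Ft
  have hI : Integrable (Function.uncurry fun (t : ℝ) (y : ℝ) =>
      Complex.exp (-Complex.I * t * ((x - y : ℝ) : ℂ)) * ψ t) ((volume : Measure ℝ).prod ν) := by
    have h1 : Integrable (fun p : ℝ × ℝ => ψ p.1) ((volume : Measure ℝ).prod ν) := hψ.comp_fst ν
    refine h1.norm.mono' ?_ (ae_of_all _ fun p => ?_)
    · unfold Function.uncurry
      exact (Measurable.aestronglyMeasurable (by fun_prop)).mul h1.1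
    · unfold Function.uncurry
      rw [norm_mul, norm_Ft_exp, one_mul]
  rw [← integral_integral_swap hI]
  congr 1
  ext t
  beta_reduce
  rw [charFun_apply_real, integral_mul_const, ← mul_assoc, ← integral_const_mul]
  congr 2
  ext y
  rw [← Complex.exp_add]
  congr 1
  push_cast
  ring

lemma Ft_pow_nonneg {ψ : ℝ → ℂ} (hψ : Integrable ψ) (ν : Measure ℝ) [IsFiniteMeasure ν]
    (h0 : ∀ x, 0 ≤ (Ft ψ x).re) (k : ℕ) :
    Integrable (fun t => charFun ν t ^ k * ψ t) ∧ ∀ x, 0 ≤ (Ft (fun t => charFun ν t ^ k * ψ t) x).re := by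
  induction k with
  | zero => simpa using ⟨hψ, h0⟩
  | succ k ih =>
    have e : (fun t => charFun ν t ^ (k+1) * ψ t) = fun t => charFun ν t * (charFun ν t ^ k * ψ t) := by
      ext t; ring
    rw [e]
    refine ⟨charFun_mul_integrable ih.1 ν, fun x => ?_⟩
    rw [Ft_charFun ih.1 ν]
    have := integral_re (Ft_shift_integrable ih.1 ν x)
    simp only [RCLike.re_to_complex] at this
    rw [← this]
    exact integral_nonneg fun y => ih.2 _

lemma Ft_exp_hasSum {ψ : ℝ → ℂ} (hψ : Integrable ψ) (ν : Measure ℝ) [IsFiniteMeasure ν] (x : ℝ)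
    (hk : ∀ k : ℕ, Integrable (fun t => charFun ν t ^ k * ψ t)) :
    HasSum (fun k : ℕ => ((k.factorial : ℝ)⁻¹ : ℝ) * (Ft (fun t => charFun ν t ^ k * ψ t) x))
      (Ft (fun t => Complex.exp (charFun ν t) * ψ t) x) := by
  unfold Ft
  have h1 : ∀ k : ℕ, Integrable (fun t : ℝ => (((k.factorial : ℝ)⁻¹ : ℝ) : ℂ) *
      (Complex.exp (-Complex.I * t * x) * (charFun ν t ^ k * ψ t))) :=
    fun k => (Ft_integrable (hk k) x).const_mul _
  have hb : ∀ k : ℕ, ∫ t : ℝ, ‖(((k.factorial : ℝ)⁻¹ : ℝ) : ℂ) *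
      (Complex.exp (-Complex.I * t * x) * (charFun ν t ^ k * ψ t))‖ ≤
      (ν.real Set.univ) ^ k / k.factorial * ∫ t, ‖ψ t‖ := by
    intro k
    rw [← integral_const_mul]
    refine integral_mono (h1 k).norm (hψ.norm.const_mul _) fun t => ?_
    simp only
    rw [norm_mul, norm_mul, norm_Ft_exp, one_mul, norm_mul, norm_pow, Complex.norm_real,
      Real.norm_of_nonneg (by positivity), div_eq_inv_mul, mul_assoc]
    gcongr
    exact norm_charFun_le t
  have hs := hasSum_integral_of_summable_integral_norm h1
    (Summable.of_nonneg_of_le (fun k => integral_nonneg fun t => norm_nonneg _) hb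
      ((Real.summable_pow_div_factorial _).mul_right _))
  have e : ∀ t : ℝ, ∑' k : ℕ, (((k.factorial : ℝ)⁻¹ : ℝ) : ℂ) *
      (Complex.exp (-Complex.I * t * x) * (charFun ν t ^ k * ψ t)) =
      Complex.exp (-Complex.I * t * x) * (Complex.exp (charFun ν t) * ψ t) := by
    intro t
    have he : Complex.exp (charFun ν t) = ∑' k : ℕ, charFun ν t ^ k / k.factorial := by
      rw [Complex.exp_eq_exp_ℂ, NormedSpace.exp_eq_tsum_div]
    rw [he, ← tsum_mul_right, ← tsum_mul_left]
    congr 1; ext k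
    push_cast
    ring
  simp only [e, integral_const_mul] at hs
  exact hs

lemma lemP {ψ : ℝ → ℂ} (hψ : Integrable ψ) (ν : Measure ℝ) [IsFiniteMeasure ν]
    (h0 : ∀ x, 0 ≤ (Ft ψ x).re) (x : ℝ) :
    ∫ y, (Ft ψ (x - y)).re ∂ν ≤ (Ft (fun t => Complex.exp (charFun ν t) * ψ t) x).re := by
  have hs := Complex.hasSum_re (Ft_exp_hasSum hψ ν x fun k => (Ft_pow_nonneg hψ ν h0 k).1)
  have := le_hasSum hs 1 (fun k _ => by
    rw [Complex.re_ofReal_mul]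
    exact mul_nonneg (by positivity) ((Ft_pow_nonneg hψ ν h0 k).2 x))
  refine le_trans (le_of_eq ?_) this
  simp only [pow_one, Nat.factorial_one, Nat.cast_one, inv_one, Complex.ofReal_one, one_mul]
  rw [Ft_charFun hψ ν]
  exact integral_re (Ft_shift_integrable hψ ν x)

lemma lemP0 {ψ : ℝ → ℂ} (hψ : Integrable ψ) (ν : Measure ℝ) [IsFiniteMeasure ν]
    (h0 : ∀ x, 0 ≤ (Ft ψ x).re) (x : ℝ) :
    0 ≤ (Ft (fun t => Complex.exp (charFun ν t) * ψ t) x).re :=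
  (integral_nonneg fun _ => h0 _).trans (lemP hψ ν h0 x)

lemma lemPpos {ψ : ℝ → ℂ} (hψ : Integrable ψ) (ν : Measure ℝ) [IsFiniteMeasure ν]
    (h0 : ∀ x, 0 ≤ (Ft ψ x).re) {z : ℝ} (hz : (Ft ψ z).re ≠ 0)
    (hν : ∀ O : Set ℝ, IsOpen O → O.Nonempty → 0 < ν O) (x : ℝ) :
    0 < (Ft (fun t => Complex.exp (charFun ν t) * ψ t) x).re := by
  refine lt_of_lt_of_le ?_ (lemP hψ ν h0 x)
  rw [integral_pos_iff_support_of_nonneg (fun y => h0 _) (Ft_shift_integrable hψ ν x).re]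
  have hc : Continuous fun y => (Ft ψ (x - y)).re :=
    Complex.continuous_re.comp ((Ft_continuous hψ).comp (continuous_const.sub continuous_id))
  exact hν _ hc.isOpen_support ⟨x - z, by simpa using hz⟩

end

noncomputable section

lemma Ft_gauss_nonneg {ε : ℝ} (hε : 0 < ε) (D x : ℝ) :
    0 ≤ (Ft (fun t : ℝ => Complex.exp (-Complex.I * t * D) * Complex.exp (-ε * t^2)) x).re := by
  have h := fourierIntegral_gaussian (b := (ε:ℂ)) (by simpa using hε) ((-(x+D) : ℝ) : ℂ)
  have e : Ft (fun t : ℝ => Complex.exp (-Complex.I * t * D) * Complex.exp (-ε * t^2)) x =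
      ((Real.pi/ε)^(1/2:ℝ) * Real.exp (-(x+D)^2/(4*ε)) : ℝ) := by
    unfold Ft
    rw [Complex.ofReal_mul, Complex.ofReal_cpow (by positivity)]
    push_cast at h ⊢
    rw [show (-(x+D:ℂ)^2/(4*ε)) = -(-(x+D:ℂ))^2/(4*ε) by ring, ← h]
    congr 1; ext t
    rw [← mul_assoc, ← Complex.exp_add]
    congr 2
    ring
  rw [e, Complex.ofReal_re]
  positivity

lemma gauss_integrable {ε : ℝ} (hε : 0 < ε) : Integrable (fun t : ℝ => Real.exp (-ε * t^2)) :=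
  integrable_exp_neg_mul_sq hε

lemma gaussD_integrable {ε : ℝ} (hε : 0 < ε) (D : ℝ) :
    Integrable (fun t : ℝ => Complex.exp (-Complex.I * t * D) * Complex.exp (-ε * t^2)) := by
  refine (gauss_integrable hε).mono' (by apply Measurable.aestronglyMeasurable; fun_prop)
    (ae_of_all _ fun t => ?_)
  rw [norm_mul, norm_Ft_exp, one_mul, show (-ε * t^2 : ℂ) = ((-ε*t^2 : ℝ) : ℂ) by push_cast; ring,
    Complex.norm_exp_ofReal]

lemma Ft_const_mul (c : ℂ) (ψ : ℝ → ℂ) (x : ℝ) : Ft (fun t => c * ψ t) x = c * Ft ψ x := by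
  unfold Ft
  rw [← integral_const_mul]
  congr 1; ext t; ring

lemma Lam_re_nonpos {a : ℝ} (ha : 0 < a) (ha2 : a < 2) (b t : ℝ) {s : Set ℝ} (hs : s ⊆ Set.Ioi 0)
    (hm : MeasurableSet s) : (∫ r in s, Lam a b t r).re ≤ 0 := by
  have hi := (Lam_integrable ha ha2 b t).mono_set hs
  have := integral_re hi
  simp only [RCLike.re_to_complex] at this
  rw [← this]
  refine setIntegral_nonpos hm fun r hr => ?_
  have hr0 : 0 < r := hs hr
  have hJ := JJ_pos ha ha2
  have h1 : (Lam a b t r).re = -((1/JJ a) * RI a t r) := by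
    unfold Lam
    rw [Complex.add_re, Complex.ofReal_re, Complex.mul_re, Complex.ofReal_im, Complex.I_re]
    ring
  rw [h1]
  have := Real.rpow_nonneg hr0.le (a-1)
  unfold RI
  have : 0 ≤ 1 / JJ a * (r ^ (a - 1) * (t ^ 2 / (r ^ 2 + t ^ 2))) := by positivity
  linarith

lemma step_R {a b : ℝ} (ha : 0 < a) (ha2 : a < 2) (hb : -1 < b) (hb1 : b < 1)
    {ε : ℝ} (hε : 0 < ε) (R D1 x : ℝ) :
    AEStronglyMeasurable (fun t : ℝ => Complex.exp ((∫ r in Set.Ioc 1 R, Lam a b t r) - Complex.I * t * D1)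
      * Complex.exp (-ε * t^2)) ∧
    0 ≤ (Ft (fun t : ℝ => Complex.exp ((∫ r in Set.Ioc 1 R, Lam a b t r) - Complex.I * t * D1)
      * Complex.exp (-ε * t^2)) x).re := by
  obtain ⟨lam, D, h⟩ := nu_Lam ha ha2 hb hb1 zero_le_one R
  have := nu_finite ha ha2 hb hb1 zero_le_one R
  have hc : Continuous (charFun (nu a b 1 R)) := continuous_charFun
  have e : (fun t : ℝ => Complex.exp ((∫ r in Set.Ioc 1 R, Lam a b t r) - Complex.I * t * D1)
      * Complex.exp (-ε * t^2)) = fun t => ((Real.exp (-lam) : ℝ) : ℂ) * (Complex.exp (charFun (nu a b 1 R) t) *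
        (Complex.exp (-Complex.I * t * ((D + D1 : ℝ) : ℂ)) * Complex.exp (-ε * t^2))) := by
    ext t
    rw [h t, Complex.ofReal_exp, ← Complex.exp_add, ← Complex.exp_add, ← Complex.exp_add, ← Complex.exp_add]
    congr 1
    push_cast
    ring
  constructor
  · rw [e]
    apply Continuous.aestronglyMeasurable
    fun_prop
  · rw [e, Ft_const_mul, Complex.re_ofReal_mul]
    exact mul_nonneg (Real.exp_pos _).le (lemP0 (gaussD_integrable hε _) _ (Ft_gauss_nonneg hε _) x)

lemma step_eps {a b : ℝ} (ha : 0 < a) (ha2 : a < 2) (hb : -1 < b) (hb1 : b < 1)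
    {ε : ℝ} (hε : 0 < ε) (D1 x : ℝ) :
    0 ≤ (Ft (fun t : ℝ => Complex.exp ((∫ r in Set.Ioi 1, Lam a b t r) - Complex.I * t * D1)
      * Complex.exp (-ε * t^2)) x).re := by
  have ht : Tendsto (fun n : ℕ => Ft (fun t : ℝ => Complex.exp ((∫ r in Set.Ioc 1 (n+1:ℝ), Lam a b t r) - Complex.I * t * D1)
      * Complex.exp (-ε * t^2)) x) atTop (𝓝 (Ft (fun t : ℝ => Complex.exp ((∫ r in Set.Ioi 1, Lam a b t r) - Complex.I * t * D1)
      * Complex.exp (-ε * t^2)) x)) := by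
    unfold Ft
    refine tendsto_integral_of_dominated_convergence (fun t : ℝ => Real.exp (-ε * t^2)) (fun n => ?_)
      (gauss_integrable hε) (fun n => ae_of_all _ fun t => ?_) (ae_of_all _ fun t => ?_)
    · exact (Measurable.aestronglyMeasurable (by fun_prop)).mul (step_R ha ha2 hb hb1 hε _ D1 x).1
    · rw [norm_mul, norm_Ft_exp, one_mul, norm_mul, show (-ε * t^2 : ℂ) = ((-ε*t^2 : ℝ) : ℂ) by push_cast; ring,
        Complex.norm_exp_ofReal, Complex.norm_exp]
      have := Lam_re_nonpos ha ha2 b t (s := Set.Ioc 1 (n+1:ℝ)) (fun r hr => lt_trans one_pos hr.1) measurableSet_Ioc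
      have h2 : ((∫ r in Set.Ioc 1 (n+1:ℝ), Lam a b t r) - Complex.I * t * D1).re ≤ 0 := by
        simpa using this
      calc _ ≤ 1 * Real.exp (-ε * t^2) := by gcongr; exact Real.exp_le_one_iff.2 h2
        _ = _ := one_mul _
    · have hi : IntegrableOn (Lam a b t) (Set.Ioi 1) :=
        (Lam_integrable ha ha2 b t).mono_set (Set.Ioi_subset_Ioi zero_le_one)
      have h1 := intervalIntegral_tendsto_integral_Ioi (l := atTop) (b := fun n : ℕ => (n+1:ℝ)) 1 hi
        (tendsto_atTop_add_const_right _ _ tendsto_natCast_atTop_atTop)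
      have h2 : ∀ n : ℕ, ∫ r in (1:ℝ)..(n+1:ℝ), Lam a b t r = ∫ r in Set.Ioc 1 (n+1:ℝ), Lam a b t r :=
        fun n => intervalIntegral.integral_of_le (by simp)
      simp only [h2] at h1
      exact (((Complex.continuous_exp.tendsto _).comp (h1.sub_const _)).mul_const _).const_mul _
  exact ge_of_tendsto' ((Complex.continuous_re.tendsto _).comp ht) fun n => (step_R ha ha2 hb hb1 hε _ D1 x).2

lemma step_final {a b : ℝ} (ha : 0 < a) (ha2 : a < 2) (hb : -1 < b) (hb1 : b < 1)
    {D1 : ℝ} (hi : Integrable (fun t : ℝ => Complex.exp ((∫ r in Set.Ioi 1, Lam a b t r) - Complex.I * t * D1)))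
    (x : ℝ) : 0 ≤ (Ft (fun t : ℝ => Complex.exp ((∫ r in Set.Ioi 1, Lam a b t r) - Complex.I * t * D1)) x).re := by
  have ht : Tendsto (fun n : ℕ => Ft (fun t : ℝ => Complex.exp ((∫ r in Set.Ioi 1, Lam a b t r) - Complex.I * t * D1)
      * Complex.exp (-((1/((n:ℝ)+1) : ℝ) : ℂ) * t^2)) x) atTop (𝓝 (Ft (fun t : ℝ => Complex.exp ((∫ r in Set.Ioi 1, Lam a b t r) - Complex.I * t * D1)) x)) := by
    unfold Ft
    refine tendsto_integral_of_dominated_convergence _ (fun n => ?_)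
      hi.norm (fun n => ae_of_all _ fun t => ?_) (ae_of_all _ fun t => ?_)
    · exact (Measurable.aestronglyMeasurable (by fun_prop)).mul (hi.1.mul (Measurable.aestronglyMeasurable (by fun_prop)))
    · rw [norm_mul, norm_Ft_exp, one_mul, norm_mul,
        show (-((1/((n:ℝ)+1) : ℝ) : ℂ) * t^2 : ℂ) = ((-(1/((n:ℝ)+1))*t^2 : ℝ) : ℂ) by push_cast; ring,
        Complex.norm_exp_ofReal]
      apply mul_le_of_le_one_right (norm_nonneg _)
      apply Real.exp_le_one_iff.2
      have : 0 ≤ 1/((n:ℝ)+1) * t^2 := by positivity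
      linarith
    · have h1 : Tendsto (fun n : ℕ => Complex.exp (-((1/((n:ℝ)+1) : ℝ) : ℂ) * t^2)) atTop (𝓝 1) := by
        have h2 := (Complex.continuous_ofReal.tendsto _).comp (tendsto_one_div_add_atTop_nhds_zero_nat (𝕜 := ℝ))
        have h3 := (Complex.continuous_exp.tendsto _).comp ((h2.neg).mul_const ((t:ℂ)^2))
        rw [Complex.ofReal_zero, neg_zero, zero_mul, Complex.exp_zero] at h3
        exact h3
      simpa only [mul_one] using (h1.const_mul _).const_mul _
  exact ge_of_tendsto' ((Complex.continuous_re.tendsto _).comp ht) fun n => step_eps ha ha2 hb hb1 (by positivity) D1 x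

lemma psi0_neg (a b t : ℝ) : psi0 a b (-t) = (starRingEnd ℂ) (psi0 a b t) := by
  unfold psi0
  rw [abs_neg, Real.sign_neg, map_sub, map_mul, Complex.conj_ofReal, Complex.conj_ofReal, Complex.conj_I]
  push_cast
  ring

lemma psi0_contAt (a b : ℝ) : ContinuousAt (psi0 a b) 1 := by
  have h : psi0 a b =ᶠ[𝓝 1] fun t => ((-(t^a):ℝ):ℂ) - Complex.I*((b*1*Gf a t :ℝ):ℂ) := by
    filter_upwards [lt_mem_nhds (zero_lt_one' ℝ)] with t ht
    rw [psi0, abs_of_pos ht, Real.sign_of_pos ht]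
  rw [continuousAt_congr h]
  have h1 : ContinuousAt (fun t : ℝ => t^a) 1 := Real.continuousAt_rpow_const _ _ (Or.inl one_ne_zero)
  have h2 : ContinuousAt (Gf a) 1 := by
    unfold Gf
    split_ifs
    · exact (continuousAt_const.mul continuousAt_id).mul (Real.continuousAt_log one_ne_zero)
    · exact continuousAt_const.mul (continuousAt_id.sub h1)
  exact (Complex.continuous_ofReal.continuousAt.comp h1.neg).sub
    (continuousAt_const.mul (Complex.continuous_ofReal.continuousAt.comp (continuousAt_const.mul h2)))

lemma Ft_ne_zero {ψ : ℝ → ℂ} (hψ : Integrable ψ) (hs : ∀ t, ψ (-t) = (starRingEnd ℂ) (ψ t))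
    (hc : ContinuousAt ψ 1) (h1 : ψ 1 ≠ 0) : ∃ z, (Ft ψ z).re ≠ 0 := by
  by_contra! hz
  have him : ∀ x, (starRingEnd ℂ) (Ft ψ x) = Ft ψ x := by
    intro x
    unfold Ft
    rw [← integral_conj, ← integral_neg_eq_self]
    congr 1; ext t
    rw [map_mul, ← hs, neg_neg, ← Complex.exp_conj]
    congr 2
    simp
  have h0 : ∀ x, Ft ψ x = 0 := by
    intro x
    apply Complex.ext
    · exact hz x
    · exact Complex.conj_eq_iff_im.1 (him x)
  have hF : FourierTransform.fourier ψ = 0 := by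
    ext w
    rw [Real.fourier_real_eq_integral_exp_smul]
    have := h0 (2 * Real.pi * w)
    unfold Ft at this
    rw [Pi.zero_apply, ← this]
    congr 1; ext t
    rw [smul_eq_mul]
    congr 2
    push_cast; ring
  have := hψ.fourierInv_fourier_eq (by rw [hF]; exact integrable_zero _ _ _) hc
  rw [hF] at this
  apply h1
  rw [← this, Real.fourierInv_eq']
  simp

lemma Fh_pos {a b : ℝ} (ha : 0 < a) (ha2 : a < 2) (hb : -1 < b) (hb1 : b < 1) (y : ℝ) :
    0 < Fh a b y := by
  obtain ⟨lam, D, h⟩ := nu_Lam ha ha2 hb hb1 le_rfl 1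
  have := nu_finite ha ha2 hb hb1 le_rfl 1
  set ν := nu a b 0 1 with hν
  have hc : Continuous (charFun ν) := continuous_charFun
  have hsplit : ∀ t, (∫ r in Set.Ioi 1, Lam a b t r) - Complex.I * t * D =
      psi0 a b t - (charFun ν t - lam) := by
    intro t
    have hi := Lam_integrable ha ha2 b t
    rw [psi0_eq_Lam ha ha2, ← Set.Ioc_union_Ioi_eq_Ioi (zero_le_one' ℝ),
      setIntegral_union (Set.Ioc_disjoint_Ioi le_rfl) measurableSet_Ioi
        (hi.mono_set Set.Ioc_subset_Ioi_self) (hi.mono_set (Set.Ioi_subset_Ioi zero_le_one)), h t]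
    ring
  have hE : (fun t : ℝ => Complex.exp ((∫ r in Set.Ioi 1, Lam a b t r) - Complex.I * t * D)) =
      fun t => Complex.exp (-(charFun ν t - lam)) * Complex.exp (psi0 a b t) := by
    ext t
    rw [hsplit, ← Complex.exp_add]; congr 1; ring
  have hint : Integrable (fun t : ℝ => Complex.exp ((∫ r in Set.Ioi 1, Lam a b t r) - Complex.I * t * D)) := by
    rw [hE]
    refine Integrable.bdd_mul (c := Real.exp (ν.real Set.univ + |lam|)) (integrable_exp_psi0 ha b) ?_ (ae_of_all _ fun t => ?_)
    · apply Continuous.aestronglyMeasurable; fun_prop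
    · rw [Complex.norm_exp]
      gcongr
      calc _ ≤ ‖-(charFun ν t - lam)‖ := Complex.re_le_norm _
        _ ≤ ‖charFun ν t‖ + ‖(lam:ℂ)‖ := by rw [norm_neg]; exact norm_sub_le _ _
        _ ≤ _ := by
          rw [Complex.norm_real, Real.norm_eq_abs]
          gcongr
          exact norm_charFun_le t
  have hnn := step_final ha ha2 hb hb1 hint
  obtain ⟨z, hz⟩ := Ft_ne_zero hint (by
      intro t
      have e : ∀ t : ℝ, Complex.exp ((∫ r in Set.Ioi 1, Lam a b t r) - Complex.I * t * D) =
        Complex.exp (-(charFun ν t - lam)) * Complex.exp (psi0 a b t) := congrFun hE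
      rw [e, e, map_mul, ← Complex.exp_conj, ← Complex.exp_conj, psi0_neg, charFun_neg, map_neg, map_sub,
        Complex.conj_ofReal])
    (by
      rw [hE]
      have h1 := psi0_contAt a b
      have h2 := Complex.continuous_exp.continuousAt.comp h1
      refine ContinuousAt.mul ?_ h2
      apply Continuous.continuousAt; fun_prop)
    (Complex.exp_ne_zero _)
  have hp := lemPpos hint ν hnn hz (fun O hO hne => nu_open ha ha2 hb hb1 le_rfl zero_lt_one hO hne) y
  have e2 : (fun t : ℝ => Complex.exp (charFun ν t) *
      Complex.exp ((∫ r in Set.Ioi 1, Lam a b t r) - Complex.I * t * D)) =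
      fun t => ((Real.exp lam : ℝ) : ℂ) * Complex.exp (psi0 a b t) := by
    ext t
    rw [hsplit, Complex.ofReal_exp, ← Complex.exp_add, ← Complex.exp_add]
    congr 1; ring
  rw [e2, Ft_const_mul, Complex.re_ofReal_mul] at hp
  have := (mul_pos_iff_of_pos_left (Real.exp_pos lam)).1 hp
  exact this

lemma fM_ne_zero : ∀ θ ∈ ThetaInt, ∀ x, fM θ x ≠ 0 := by
  intro θ hθ x
  rw [fM_eq hθ]
  have h := Fh_pos hθ.2.1.1 hθ.2.1.2 hθ.2.2.1 hθ.2.2.2 ((x - θ 0)/θ 1)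
  have h1 := hθ.1
  have := Real.pi_pos
  positivity

end

end Helpers

/-- For every `θ ∈ Θ_M°` and every `x ∈ ℝ`, the score functions
`ℓ_{θᵢ}(x;θ) = f_{θᵢ}(x;θ)/f(x;θ)`, their `x`-derivatives and their parameter derivatives
are well-defined (the density is nonvanishing and the relevant derivatives exist), and
all of these functions are jointly continuous in `(x, θ)` on `ℝ × Θ_M°`. -/
theorem scores_wellDefined_jointly_continuous :
    (∀ θ ∈ ThetaInt, ∀ x : ℝ, fM θ x ≠ 0) ∧
    (∀ θ ∈ ThetaInt, ∀ x : ℝ, ∀ i : Fin 4,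
      DifferentiableAt ℝ (fun y => ellP i θ y) x) ∧
    (∀ θ ∈ ThetaInt, ∀ x : ℝ, ∀ i j : Fin 4,
      DifferentiableAt ℝ (fun s => ellP i (Function.update θ j s) x) (θ j)) ∧
    (∀ i : Fin 4, ContinuousOn (fun p : ℝ × (Fin 4 → ℝ) => ellP i p.2 p.1)
      {p : ℝ × (Fin 4 → ℝ) | p.2 ∈ ThetaInt}) ∧
    (∀ i : Fin 4, ContinuousOn (fun p : ℝ × (Fin 4 → ℝ) => ellPX i p.2 p.1)
      {p : ℝ × (Fin 4 → ℝ) | p.2 ∈ ThetaInt}) ∧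
    (∀ i j : Fin 4, ContinuousOn (fun p : ℝ × (Fin 4 → ℝ) => ellPP i j p.2 p.1)
      {p : ℝ × (Fin 4 → ℝ) | p.2 ∈ ThetaInt}) := by
  exact main_of_pos fM_ne_zero
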